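/- arXiv:1704.07125 — 3 statements merged into one kernel-verified Lean document; each statement's English description precedes it below -/
import Mathlib

section
/- Let a_0 < a_1 < … < a_{l_0} < a' < a < x_0 < b < b' < a_{l_0+1} < … < a_l < a_{l+1} be real numbers and k_0, k_1, …, k_l positive integers, and set Z(x) := ∏_{j=1}^l (x − a_j)^{k_j}. Then there exists δ_1 > 0 such that for all sufficiently large m there exists a real polynomial Q of degree at most m satisfying: (i) Q(x_0) = 1; (ii) Q^{(j)}(x_0) = 0 for j = 1, …, k_0; (iii) |Q(x)| < 1 for all x ∈ [a_0, a_{l+1}] with x ≠ x_0; (iv) |Q(x) − 1| ≤ exp(−δ_1 m) for x ∈ [a, b]; (v) |Q(x)| ≤ min(1, |Z(x)|)·exp(−δ_1 m) for x ∈ [a_0, a'] ∪ [b', a_{l+1}]; (vi) Q is strictly monotone on [a', a] and on [b, b']; (vii) Q^{(κ)}(a_j) = 0 for j = 1, …, l and κ = 0, 1, …, k_j; (viii) Q(x) ≥ 0 for all x ∈ [a_0, a_{l+1}]. -/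
open Polynomial
lemma antider (f : ℝ[X]) : ∃ G : ℝ[X], derivative G = f ∧ G.natDegree ≤ f.natDegree + 1 ∧ G.eval 0 = 0 := by
  refine ⟨∑ i ∈ Finset.range (f.natDegree+1), C (f.coeff i / (i+1)) * X^(i+1), ?_, ?_, ?_⟩
  · rw [derivative_sum]
    conv_rhs => rw [f.as_sum_range_C_mul_X_pow]
    refine Finset.sum_congr rfl fun i _ => ?_
    rw [derivative_C_mul_X_pow]
    congr 2
    push_cast
    field_simp
  · refine natDegree_sum_le_of_forall_le _ _ fun i hi => ?_
    refine (natDegree_C_mul_X_pow_le _ _).trans ?_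
    have := Finset.mem_range.1 hi
    omega
  · simp [eval_finsetSum]

lemma iterD (p : ℝ[X]) (j : ℕ) : iteratedDeriv j (fun x => p.eval x) = fun x => (derivative^[j] p).eval x := by
  induction j with
  | zero => simp
  | succ j ih =>
    rw [iteratedDeriv_succ, ih, Function.iterate_succ_apply']
    funext x
    simp

lemma vanish (p : ℝ[X]) (r : ℝ) (n j : ℕ) (h : (X - C r)^n ∣ p) (hj : j < n) :
   (derivative^[j] p).eval r = 0 := by
  have := pow_sub_dvd_iterate_derivative_of_pow_dvd j h
  obtain ⟨q, hq⟩ := this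
  rw [hq]
  have : n - j ≠ 0 := by omega
  simp [this]

lemma shape (a' x₀ b' L R : ℝ) (h1 : a' < x₀) (h2 : x₀ < b') : ∃ u w : ℝ[X],
    u.eval x₀ = 1 ∧ derivative u = -((X - C x₀) * w) ∧ (∀ x, 0 < w.eval x) ∧
    (∀ x ∈ Set.Icc L R, 0 < u.eval x) ∧ u.eval a' = u.eval b' := by
  obtain ⟨n, hn1, hn2⟩ : ∃ n : ℕ, (b' - x₀) < (2*n+1) * (x₀ - a') ∧ (x₀ - a') < (2*n+1) * (b' - x₀) := by
    obtain ⟨n, hn⟩ := exists_nat_gt (max ((b' - x₀)/(x₀ - a')) ((x₀ - a')/(b' - x₀)))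
    have q1 : 0 < x₀ - a' := by linarith
    have q2 : 0 < b' - x₀ := by linarith
    have e1 := (le_max_left _ _).trans_lt hn
    have e2 := (le_max_right _ _).trans_lt hn
    rw [div_lt_iff₀ (by linarith)] at e1 e2
    have hn0 : (0:ℝ) ≤ n := by positivity
    exact ⟨n, by nlinarith, by nlinarith⟩
  set s : ℝ := (b'-a')^(2*n+1) * ((b'-a')/(2*n+2) - (x₀-a')/(2*n+1)) with hs
  set t : ℝ := (b'-a')^(2*n+1) * ((b'-a')/(2*n+2) - (b'-x₀)/(2*n+1)) with ht
  have hs0 : 0 < s := by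
    have : 0 < b' - a' := by linarith
    refine mul_pos (by positivity) ?_
    rw [sub_pos, div_lt_div_iff₀ (by positivity) (by positivity)]
    nlinarith
  have ht0 : 0 < t := by
    have : 0 < b' - a' := by linarith
    refine mul_pos (by positivity) ?_
    rw [sub_pos, div_lt_div_iff₀ (by positivity) (by positivity)]
    nlinarith
  let Om : ℝ[X] := C s * (C (1/(2*n+2:ℝ)) * (X - C b')^(2*n+2) + C ((b'-x₀)/(2*n+1)) * (X - C b')^(2*n+1))
    + C t * (C (1/(2*n+2:ℝ)) * (X - C a')^(2*n+2) - C ((x₀-a')/(2*n+1)) * (X - C a')^(2*n+1))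
  let w0 : ℝ[X] := C s * (X - C b')^(2*n) + C t * (X - C a')^(2*n)
  have hOm : derivative Om = (X - C x₀) * w0 := by
    refine Polynomial.funext fun x => ?_
    simp [Om, w0, derivative_pow]
    field_simp
    ring
  have hw0 : ∀ x, 0 < w0.eval x := by
    intro x
    simp only [w0, eval_add, eval_mul, eval_C, eval_pow, eval_sub, eval_X]
    have e1 : 0 ≤ (x - b')^(2*n) := by rw [pow_mul]; positivity
    have e2 : 0 ≤ (x - a')^(2*n) := by rw [pow_mul]; positivity
    by_cases hx : x = b'
    · have : 0 < (x - a')^(2*n) := pow_pos (by linarith) _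
      nlinarith [mul_pos ht0 this, mul_nonneg hs0.le e1]
    · have : 0 < (x - b')^(2*n) := by
        have : x - b' ≠ 0 := sub_ne_zero.2 hx
        rw [pow_mul]; positivity
      nlinarith [mul_pos hs0 this, mul_nonneg ht0.le e2]
  have hab : Om.eval a' = Om.eval b' := by
    simp only [Om, eval_add, eval_mul, eval_C, eval_pow, eval_sub, eval_X, sub_self]
    have : a' - b' = -(b' - a') := by ring
    have ee : (-(b'-a'))^(2*n+2) = (b'-a')^(2*n+2) := by apply Even.neg_pow; exact ⟨n+1, by ring⟩
    have eo : (-(b'-a'))^(2*n+1) = -(b'-a')^(2*n+1) := by apply Odd.neg_pow; exact ⟨n, by ring⟩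
    rw [this, ee, eo, hs, ht]
    ring
  obtain ⟨B, hB⟩ := (isCompact_Icc (a := L) (b := R)).exists_bound_of_continuousOn (f := fun x => (Om - C (Om.eval x₀)).eval x)
    (Polynomial.continuous _).continuousOn
  let ε : ℝ := 1/(|B|+1)
  have hε : 0 < ε := by positivity
  refine ⟨1 - C ε * (Om - C (Om.eval x₀)), C ε * w0, ?_, ?_, ?_, ?_, ?_⟩
  · simp
  · simp [hOm]; ring
  · intro x; simpa using mul_pos hε (hw0 x)
  · intro x hx
    have := hB x hx
    simp only [eval_sub, eval_C, Real.norm_eq_abs] at this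
    simp only [eval_sub, eval_mul, eval_C, eval_one]
    have h3 : Om.eval x - Om.eval x₀ < |B| + 1 := by
      linarith [le_abs_self (Om.eval x - Om.eval x₀), le_abs_self B]
    have : ε * (Om.eval x - Om.eval x₀) < 1 := by
      simp only [ε]; rw [one_div, inv_mul_lt_iff₀ (by positivity)]; linarith
    linarith
  · simp [hab]

lemma step (k : ℕ) (c1 c2 : ℝ) (h0 : 0 ≤ c1) (h1 : c1 < c2) (h2 : c2 < 1) :
    ∃ K r : ℝ, 0 < K ∧ 0 < r ∧ r < 1 ∧ ∀ n : ℕ, ∃ g : ℝ[X], g.natDegree ≤ 2*n+k+1 ∧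
      g.eval 0 = 0 ∧ g.eval 1 = 1 ∧ StrictMonoOn (fun x => g.eval x) (Set.Icc 0 1) ∧
      (1 - X)^k ∣ derivative g ∧ (∀ t ∈ Set.Icc 0 c1, g.eval t ≤ K * r^n * t) ∧
      (∀ t ∈ Set.Icc c2 1, 1 - g.eval t ≤ K * r^n) := by
  obtain ⟨η, hη⟩ : ∃ η, η = (c2-c1)/2 := ⟨_, rfl⟩
  obtain ⟨c, hc⟩ : ∃ c, c = (c1+c2)/2 := ⟨_, rfl⟩
  have hη0 : 0 < η := by linarith
  have hη1 : η < 1/2 := by linarith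
  have hκ : 0 < (1-c2)^k := pow_pos (by linarith) _
  have hd : 0 < 1 - η^2/4 := by nlinarith
  have hd' : 0 < 1 - η^2 := by nlinarith
  refine ⟨1/((1-c2)^k*η), (1-η^2)/(1-η^2/4), by positivity, by positivity, ?_, ?_⟩
  · rw [div_lt_one hd]; nlinarith
  intro n
  let f : ℝ[X] := (1-X)^k * (1 - (X - C c)^2)^n
  obtain ⟨G, hG, hGd, hG0⟩ := antider f
  have hfe : ∀ x, f.eval x = (1-x)^k * (1-(x-c)^2)^n := fun x => by simp [f]
  have hder : ∀ x, deriv (fun x => G.eval x) x = (1-x)^k * (1-(x-c)^2)^n := by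
    intro x; rw [Polynomial.deriv, hG, hfe]
  have hfd : f.natDegree ≤ 2*n+k := by
    have e1 : ((1:ℝ[X]) - X).natDegree ≤ 1 := by compute_degree
    have e2 : ((1:ℝ[X]) - (X - C c)^2).natDegree ≤ 2 := by compute_degree
    refine natDegree_mul_le.trans ?_
    have q1 := natDegree_pow_le_of_le k e1
    have q2 := natDegree_pow_le_of_le n e2
    omega
  have hcont : ∀ s, ContinuousOn (fun x => G.eval x) s := fun s => (Polynomial.continuous _).continuousOn
  have hdiff : ∀ s, DifferentiableOn ℝ (fun x => G.eval x) s := fun s => (Polynomial.differentiable _).differentiableOn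
  have hmono : StrictMonoOn (fun x => G.eval x) (Set.Icc 0 1) := by
    refine strictMonoOn_of_deriv_pos (convex_Icc _ _) (hcont _) ?_
    intro x hx
    rw [interior_Icc] at hx
    rw [hder]
    have : 0 < 1 - x := by linarith [hx.2]
    have h3 : 0 < 1 - (x-c)^2 := by nlinarith [hx.1, hx.2]
    positivity
  have up : ∀ x ∈ Set.Icc (0:ℝ) 1, η ≤ |x - c| → (1-x)^k * (1-(x-c)^2)^n ≤ (1-η^2)^n := by
    intro x hx h
    have e1 : (1-x)^k ≤ 1 := pow_le_one₀ (by linarith [hx.2]) (by linarith [hx.1])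
    have e0 : 0 ≤ (1-x)^k := pow_nonneg (by linarith [hx.2]) _
    have h3 : 0 ≤ 1 - (x-c)^2 := by nlinarith [hx.1, hx.2]
    have h4 : (x-c)^2 ≥ η^2 := by rw [← sq_abs (x-c)]; gcongr
    have e2 : (1-(x-c)^2)^n ≤ (1-η^2)^n := pow_le_pow_left₀ h3 (by linarith) _
    calc _ ≤ 1 * (1-(x-c)^2)^n := by gcongr
      _ ≤ _ := by linarith
  have low : (1-c2)^k*η * (1-η^2/4)^n ≤ G.eval 1 := by
    have := (convex_Icc (c-η/2) (c+η/2)).mul_sub_le_image_sub_of_le_deriv (hcont _) (hdiff _)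
      (C := (1-c2)^k * (1-η^2/4)^n) (by
        intro x hx
        rw [interior_Icc] at hx
        rw [hder]
        have e1 : (1-c2)^k ≤ (1-x)^k := pow_le_pow_left₀ (by linarith) (by linarith [hx.2]) _
        have e2 : (1-η^2/4)^n ≤ (1-(x-c)^2)^n := pow_le_pow_left₀ hd.le (by nlinarith [hx.1, hx.2]) _
        gcongr
        exact hκ.le.trans e1) (c-η/2) ⟨le_rfl, by linarith⟩ (c+η/2) ⟨by linarith, le_rfl⟩ (by linarith)
    have m1 := hmono.monotoneOn (a := 0) (b := c-η/2) ⟨by linarith, by linarith⟩ ⟨by linarith, by linarith⟩ (by linarith)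
    have m2 := hmono.monotoneOn (a := c+η/2) (b := 1) ⟨by linarith, by linarith⟩ ⟨by linarith, by linarith⟩ (by linarith)
    change G.eval 0 ≤ _ at m1
    change _ ≤ G.eval 1 at m2
    rw [hG0] at m1
    beta_reduce at m1 m2 this
    nlinarith
  have lowpos : 0 < (1-c2)^k*η * (1-η^2/4)^n := by positivity
  have hG1 : 0 < G.eval 1 := lowpos.trans_le low
  have hK : (1-η^2)^n / G.eval 1 ≤ 1/((1-c2)^k*η) * ((1-η^2)/(1-η^2/4))^n := by
    calc _ ≤ (1-η^2)^n / ((1-c2)^k*η * (1-η^2/4)^n) := by gcongr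
      _ = _ := by rw [div_pow]; field_simp
  refine ⟨C (1/G.eval 1) * G, ?_, ?_, ?_, ?_, ?_, ?_, ?_⟩
  · refine (natDegree_C_mul_le _ _).trans ?_
    omega
  · simp [hG0]
  · simp [hG1.ne']
  · intro x hx y hy hxy
    simp only [eval_mul, eval_C]
    exact mul_lt_mul_of_pos_left (hmono hx hy hxy) (by positivity)
  · rw [derivative_C_mul, hG]
    exact (dvd_mul_right _ _).trans (dvd_mul_left f _)
  · intro t ht
    have := (convex_Icc 0 c1).image_sub_le_mul_sub_of_deriv_le (hcont _) (hdiff _)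
      (C := (1-η^2)^n) (by
        intro x hx
        rw [interior_Icc] at hx
        rw [hder]
        apply up x ⟨hx.1.le, by linarith [hx.2]⟩
        rw [abs_sub_comm]; refine le_trans ?_ (le_abs_self _); linarith [hx.2]) 0 ⟨le_rfl, h0⟩ t ht ht.1
    simp only [hG0, sub_zero] at this
    simp only [eval_mul, eval_C]
    calc _ ≤ 1/G.eval 1 * ((1-η^2)^n * t) := by gcongr
      _ = (1-η^2)^n / G.eval 1 * t := by ring
      _ ≤ _ := by gcongr; exact ht.1
  · intro t ht
    have := (convex_Icc c2 1).image_sub_le_mul_sub_of_deriv_le (hcont _) (hdiff _)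
      (C := (1-η^2)^n) (by
        intro x hx
        rw [interior_Icc] at hx
        rw [hder]
        apply up x ⟨by linarith [hx.1], hx.2.le⟩
        refine le_trans ?_ (le_abs_self _); linarith [hx.1]) t ht 1 ⟨h2.le, le_rfl⟩ ht.2
    simp only [eval_mul, eval_C] at this ⊢
    have p : 0 < (1-η^2)^n := by positivity
    have t0 : 0 ≤ t := by linarith [ht.1]
    calc _ = 1/G.eval 1 * (G.eval 1 - G.eval t) := by field_simp
      _ ≤ 1/G.eval 1 * (1-η^2)^n := by gcongr; nlinarith
      _ = (1-η^2)^n / G.eval 1 := by ring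
      _ ≤ _ := hK

lemma hump (Z : ℝ[X]) (L R a' A x₀ b b' : ℝ) (hL : L < a') (h2 : a' < A) (h3 : A < x₀) (h4 : x₀ < b) (h5 : b < b')
    (hR : b' < R) (hZ : ∀ x ∈ Set.Icc a' b', Z.eval x ≠ 0) :
    ∃ S : ℝ[X], Z^2 ∣ S ∧ S.eval x₀ = 1 ∧ (∀ x ∈ Set.Icc L R, 0 ≤ S.eval x) ∧
      StrictMonoOn (fun x => S.eval x) (Set.Icc a' x₀) ∧ StrictAntiOn (fun x => S.eval x) (Set.Icc x₀ b') ∧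
      ∃ c1 c2 : ℝ, 0 ≤ c1 ∧ c1 < c2 ∧ c2 < 1 ∧ (∀ x ∈ Set.Icc L a' ∪ Set.Icc b' R, S.eval x ≤ c1) ∧
       (∀ x ∈ Set.Icc A b, c2 ≤ S.eval x) := by
  obtain ⟨u, w, hu0, hud, hw, hupos, huab⟩ := shape a' x₀ b' L R (by linarith) (by linarith)
  have hZne := hZ x₀ ⟨by linarith, by linarith⟩
  have hZ0 : 0 < Z.eval x₀ ^ 2 := by have := hZ x₀ ⟨by linarith, by linarith⟩; positivity
  obtain ⟨v, hv⟩ : ∃ v, v = (derivative (Z^2)).eval x₀ / Z.eval x₀ ^ 2 := ⟨_, rfl⟩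
  obtain ⟨V, hV⟩ : ∃ V : ℝ[X], V = C (1/Z.eval x₀ ^ 2) * (Z^2 * (1 - C v * (X - C x₀) + C (v^2+1) * (X - C x₀)^2)) := ⟨_, rfl⟩
  have hVx0 : V.eval x₀ = 1 := by simp [hV]; field_simp
  have hVev : ∀ x, V.eval x = 1/Z.eval x₀ ^ 2 * (Z.eval x^2 * (1 - v * (x-x₀) + (v^2+1) * (x-x₀)^2)) := by
    intro x; simp [hV]
  have hq : ∀ x : ℝ, 0 < 1 - v * (x-x₀) + (v^2+1) * (x-x₀)^2 := by
    intro x; nlinarith [sq_nonneg (v * (x-x₀) - 1/2), sq_nonneg (x-x₀)]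
  have hVnn : ∀ x, 0 ≤ V.eval x := by
    intro x; rw [hVev]; have := hq x; positivity
  have hVpos : ∀ x ∈ Set.Icc a' b', 0 < V.eval x := by
    intro x hx; rw [hVev]; have := hq x; have := hZ x hx; positivity
  obtain ⟨P, hP⟩ : (X - C x₀) ∣ derivative V := by
    rw [dvd_iff_isRoot, IsRoot, hV, derivative_C_mul, derivative_mul]
    have : (derivative (Z^2)).eval x₀ = v * Z.eval x₀ ^ 2 := by rw [hv]; field_simp
    simp only [eval_mul, eval_C, eval_add, this]
    simp [derivative_pow]
    right
    ring
  have cont : ∀ (p : ℝ[X]) s, ContinuousOn (fun x => p.eval x) s := fun p s => (Polynomial.continuous _).continuousOn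
  -- bounds
  have hne : (Set.Icc a' b').Nonempty := ⟨x₀, by linarith, by linarith⟩
  obtain ⟨y, hy, hymin⟩ := (isCompact_Icc (a := a') (b := b')).exists_isMinOn hne (cont (w*V) _)
  obtain ⟨y1, hy1, hy1min⟩ := (isCompact_Icc (a := a') (b := b')).exists_isMinOn hne (cont V _)
  obtain ⟨y2, hy2, hy2max⟩ := (isCompact_Icc (a := a') (b := b')).exists_isMaxOn hne (cont (P*u) _)
  obtain ⟨y3, hy3, hy3max⟩ := (isCompact_Icc (a := L) (b := R)).exists_isMaxOn ⟨x₀, by linarith, by linarith⟩ (cont V _)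
  have umono : StrictMonoOn (fun x => u.eval x) (Set.Iic x₀) := by
    refine strictMonoOn_of_deriv_pos (convex_Iic _) (cont u _) ?_
    intro x hx
    rw [interior_Iic] at hx
    rw [Polynomial.deriv, hud]
    simp only [eval_neg, eval_mul, eval_sub, eval_X, eval_C]
    have : 0 < x₀ - x := sub_pos.2 hx
    nlinarith [mul_pos this (hw x)]
  have uanti : StrictAntiOn (fun x => u.eval x) (Set.Ici x₀) := by
    refine strictAntiOn_of_deriv_neg (convex_Ici _) (cont u _) ?_
    intro x hx
    rw [interior_Ici] at hx
    rw [Polynomial.deriv, hud]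
    simp only [eval_neg, eval_mul, eval_sub, eval_X, eval_C]
    have : 0 < x - x₀ := sub_pos.2 hx
    nlinarith [mul_pos this (hw x)]
  obtain ⟨ρ2, hρ2⟩ : ∃ ρ, ρ = u.eval a' := ⟨_, rfl⟩
  obtain ⟨ρ1, hρ1⟩ : ∃ ρ, ρ = min (u.eval A) (u.eval b) := ⟨_, rfl⟩
  have hρ2p : 0 < ρ2 := by rw [hρ2]; exact hupos _ ⟨by linarith, by linarith⟩
  have hρ : ρ2 < ρ1 := by
    rw [hρ1, lt_min_iff]
    refine ⟨?_, ?_⟩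
    · rw [hρ2]; exact umono (Set.mem_Iic.2 (by linarith)) (Set.mem_Iic.2 (by linarith)) h2
    · rw [hρ2, huab]; exact uanti (Set.mem_Ici.2 (by linarith)) (Set.mem_Ici.2 (by linarith)) h5
  have hρ1p : 0 < ρ1 := hρ2p.trans hρ
  have uout : ∀ x ∈ Set.Icc L a' ∪ Set.Icc b' R, u.eval x ≤ ρ2 := by
    rintro x (hx | hx)
    · rw [hρ2]; exact umono.monotoneOn (Set.mem_Iic.2 (by linarith [hx.2])) (Set.mem_Iic.2 (by linarith)) hx.2
    · rw [hρ2, huab]; exact uanti.antitoneOn (Set.mem_Ici.2 (by linarith)) (Set.mem_Ici.2 (by linarith [hx.1])) hx.1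
  have uin : ∀ x ∈ Set.Icc A b, ρ1 ≤ u.eval x := by
    intro x hx
    rw [hρ1]
    rcases le_total x x₀ with h | h
    · exact (min_le_left _ _).trans (umono.monotoneOn (Set.mem_Iic.2 (by linarith)) (Set.mem_Iic.2 h) hx.1)
    · exact (min_le_right _ _).trans (uanti.antitoneOn (Set.mem_Ici.2 h) (Set.mem_Ici.2 (by linarith)) hx.2)
  have hm : 0 < (w*V).eval y := by rw [eval_mul]; exact mul_pos (hw y) (hVpos y hy)
  have hV1 := hVpos y1 hy1
  have hV3 : 0 ≤ V.eval y3 := hVnn _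
  have lim : Filter.Tendsto (fun N : ℕ => V.eval y3 * (ρ2/ρ1)^N) Filter.atTop (nhds (V.eval y3 * 0)) :=
    (tendsto_pow_atTop_nhds_zero_of_lt_one (by positivity) ((div_lt_one hρ1p).2 hρ)).const_mul _
  rw [mul_zero] at lim
  obtain ⟨N, hN1, hN2⟩ := ((lim.eventually_lt_const hV1).and (tendsto_natCast_atTop_atTop.eventually_gt_atTop ((P*u).eval y2 / (w*V).eval y))).exists
  rw [div_lt_iff₀ hm] at hN2
  rw [div_pow, mul_div_assoc', div_lt_iff₀ (by positivity)] at hN1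
  obtain ⟨S, hS⟩ : ∃ S : ℝ[X], S = V * u^N := ⟨_, rfl⟩
  have hSev : ∀ x, S.eval x = V.eval x * u.eval x ^ N := fun x => by simp [hS]
  have hSd : ∀ x, (derivative S).eval x * u.eval x = (x₀ - x) * u.eval x ^ N * (N * (w*V).eval x - (P*u).eval x) := by
    intro x
    rw [hS, derivative_mul, derivative_pow, hP, hud]
    rcases N with _ | N
    · simp; ring
    · simp; ring
  have hbr : ∀ x ∈ Set.Icc a' b', 0 < N * (w*V).eval x - (P*u).eval x := by
    intro x hx
    have e1 : (w*V).eval y ≤ (w*V).eval x := hymin hx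
    have e2 : (P*u).eval x ≤ (P*u).eval y2 := hy2max hx
    have : (N:ℝ) * (w*V).eval y ≤ N * (w*V).eval x := by gcongr
    linarith
  have Smono : StrictMonoOn (fun x => S.eval x) (Set.Icc a' x₀) := by
    refine strictMonoOn_of_deriv_pos (convex_Icc _ _) (cont S _) ?_
    intro x hx
    rw [interior_Icc] at hx
    rw [Polynomial.deriv]
    have up := hupos x ⟨by linarith [hx.1], by linarith [hx.2]⟩
    have br := hbr x ⟨hx.1.le, by linarith [hx.2]⟩
    have : 0 < x₀ - x := sub_pos.2 hx.2
    have : 0 < (derivative S).eval x * u.eval x := by rw [hSd]; positivity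
    exact pos_of_mul_pos_left this up.le
  have Santi : StrictAntiOn (fun x => S.eval x) (Set.Icc x₀ b') := by
    refine strictAntiOn_of_deriv_neg (convex_Icc _ _) (cont S _) ?_
    intro x hx
    rw [interior_Icc] at hx
    rw [Polynomial.deriv]
    have up := hupos x ⟨by linarith [hx.1], by linarith [hx.2]⟩
    have br := hbr x ⟨by linarith [hx.1], hx.2.le⟩
    have h1 : 0 < x - x₀ := sub_pos.2 hx.1
    have h2 : 0 < (x - x₀) * u.eval x ^ N * (N * (w*V).eval x - (P*u).eval x) := by positivity
    have h3 := hSd x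
    by_contra! hc
    nlinarith [mul_nonneg hc up.le]
  have Sx0 : S.eval x₀ = 1 := by rw [hSev, hVx0, hu0]; simp
  refine ⟨S, ?_, Sx0, ?_, Smono, Santi, V.eval y3 * ρ2^N, V.eval y1 * ρ1^N, by positivity, hN1, ?_, ?_, ?_⟩
  · rw [hS, hV]; exact ((dvd_mul_right _ _).mul_left _).mul_right _
  · intro x hx; rw [hSev]; have := hupos x hx; have := hVnn x; positivity
  · have e1 : S.eval A < 1 := by rw [← Sx0]; exact Smono ⟨h2.le, h3.le⟩ ⟨by linarith, le_rfl⟩ h3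
    refine lt_of_le_of_lt ?_ e1
    rw [hSev]
    have := uin A ⟨le_rfl, by linarith⟩
    have q : V.eval y1 ≤ V.eval A := hy1min (a := A) ⟨h2.le, by linarith⟩
    gcongr
    exact hVnn A
  · intro x hx
    have hx' : x ∈ Set.Icc L R := by
      rcases hx with hx | hx
      · exact ⟨hx.1, by linarith [hx.2]⟩
      · exact ⟨by linarith [hx.1], hx.2⟩
    rw [hSev]
    have q : V.eval x ≤ V.eval y3 := hy3max hx'
    have := uout x hx
    have := (hupos x hx').le
    gcongr
  · intro x hx
    rw [hSev]
    have := uin x hx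
    have q : V.eval y1 ≤ V.eval x := hy1min (a := x) ⟨by linarith [hx.1], by linarith [hx.2]⟩
    gcongr
    exact hVnn x

lemma absorb (r K : ℝ) (D : ℕ) (hD : 0 < D) (hr0 : 0 < r) (hr1 : r < 1) (hK : 0 < K) :
    ∃ δ > (0:ℝ), ∃ M : ℕ, ∀ m : ℕ, M ≤ m → K * r^(m/(4*D)) ≤ Real.exp (-(δ*m)) := by
  have hlog : Real.log r < 0 := Real.log_neg hr0 hr1
  have hDr : (0:ℝ) < D := by exact_mod_cast hD
  obtain ⟨δ, hδ⟩ : ∃ δ, δ = -Real.log r / (16*D) := ⟨_, rfl⟩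
  have hδ0 : 0 < δ := by rw [hδ]; exact div_pos (by linarith) (by positivity)
  have hlr : Real.log r = -(16*D*δ) := by rw [hδ]; field_simp
  obtain ⟨M, hM⟩ := exists_nat_gt (Real.log K / δ)
  rw [div_lt_iff₀ hδ0] at hM
  refine ⟨δ, hδ0, max M (8*D), fun m hm => ?_⟩
  have hm1 : (M:ℝ) ≤ m := by exact_mod_cast (le_max_left _ _).trans hm
  have hm2 : 8*D ≤ m := (le_max_right _ _).trans hm
  obtain ⟨n, hn⟩ : ∃ n, n = m/(4*D) := ⟨_, rfl⟩
  have hn8 : m ≤ 8*D*n := by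
    have e1 : m < 4*D*(n+1) := by rw [hn]; exact Nat.lt_mul_div_succ m (by omega)
    have : 1 ≤ n := by rw [hn, Nat.le_div_iff_mul_le (by omega)]; omega
    nlinarith
  have hn8' : (m:ℝ) ≤ 8*D*n := by exact_mod_cast hn8
  rw [← hn]
  have : K * r^n = Real.exp (Real.log K + n * Real.log r) := by
    rw [Real.exp_add, Real.exp_log hK, Real.exp_nat_mul, Real.exp_log hr0]
  rw [this, Real.exp_le_exp, hlr]
  nlinarith

/-- fast decreasing algebraic polynomials with prescribed zeros. -/
theorem stmt_0 (l l₀ : ℕ) (hl₀ : 1 ≤ l₀) (hl : l₀ + 1 ≤ l)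
    (a : ℕ → ℝ) (a' A x₀ b b' : ℝ)
    (hmono : ∀ i j : ℕ, i < j → j ≤ l + 1 → a i < a j)
    (h1 : a l₀ < a') (h2 : a' < A) (h3 : A < x₀) (h4 : x₀ < b) (h5 : b < b')
    (h6 : b' < a (l₀ + 1))
    (k : ℕ → ℕ) (hk : ∀ j ≤ l, 0 < k j) :
    ∃ δ₁ > (0 : ℝ), ∃ M : ℕ, ∀ m : ℕ, M ≤ m →
      ∃ Q : Polynomial ℝ, Q.natDegree ≤ m ∧
        Q.eval x₀ = 1 ∧
        (∀ j : ℕ, 1 ≤ j → j ≤ k 0 → iteratedDeriv j (fun x => Q.eval x) x₀ = 0) ∧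
        (∀ x ∈ Set.Icc (a 0) (a (l + 1)), x ≠ x₀ → |Q.eval x| < 1) ∧
        (∀ x ∈ Set.Icc A b, |Q.eval x - 1| ≤ Real.exp (-(δ₁ * m))) ∧
        (∀ x ∈ Set.Icc (a 0) a' ∪ Set.Icc b' (a (l + 1)),
          |Q.eval x| ≤
            min 1 (|∏ j ∈ Finset.Icc 1 l, (x - a j) ^ k j|) * Real.exp (-(δ₁ * m))) ∧
        (StrictMonoOn (fun x => Q.eval x) (Set.Icc a' A) ∨
          StrictAntiOn (fun x => Q.eval x) (Set.Icc a' A)) ∧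
        (StrictMonoOn (fun x => Q.eval x) (Set.Icc b b') ∨
          StrictAntiOn (fun x => Q.eval x) (Set.Icc b b')) ∧
        (∀ j : ℕ, 1 ≤ j → j ≤ l → ∀ κ ≤ k j,
          iteratedDeriv κ (fun x => Q.eval x) (a j) = 0) ∧
        (∀ x ∈ Set.Icc (a 0) (a (l + 1)), 0 ≤ Q.eval x) := by
  obtain ⟨Z, hZdef⟩ : ∃ Z : ℝ[X], Z = ∏ j ∈ Finset.Icc 1 l, (X - C (a j)) ^ k j := ⟨_, rfl⟩
  have hZev : ∀ x, Z.eval x = ∏ j ∈ Finset.Icc 1 l, (x - a j) ^ k j := by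
    intro x; rw [hZdef, eval_prod]; simp
  have hle : ∀ i j : ℕ, i ≤ j → j ≤ l + 1 → a i ≤ a j := by
    intro i j hij hj
    rcases hij.eq_or_lt with h | h
    · rw [h]
    · exact (hmono i j h hj).le
  have hZ : ∀ x ∈ Set.Icc a' b', Z.eval x ≠ 0 := by
    intro x hx
    rw [hZev, Finset.prod_ne_zero_iff]
    intro j hj
    rw [Finset.mem_Icc] at hj
    apply pow_ne_zero
    rw [sub_ne_zero]
    rcases le_or_gt j l₀ with h | h
    · have := hle j l₀ h (by omega)
      have := hx.1
      intro he; linarith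
    · have := hle (l₀+1) j h (by omega)
      have := hx.2
      intro he; linarith
  have hL : a 0 < a' := (hle 0 l₀ (by omega) (by omega)).trans_lt h1
  have hR : b' < a (l+1) := h6.trans_le (hle _ _ (by omega) le_rfl)
  obtain ⟨S, ⟨T, hT⟩, Sx0, Snn, Smono, Santi, c1, c2, hc0, hc12, hc21, Sout, Sin⟩ :=
    hump Z (a 0) (a (l+1)) a' A x₀ b b' hL h2 h3 h4 h5 hR hZ
  obtain ⟨K, r, hK, hr0, hr1, hstep⟩ := step (k 0) c1 c2 hc0 hc12 hc21
  obtain ⟨B, hB⟩ := (isCompact_Icc (a := a 0) (b := a (l+1))).exists_bound_of_continuousOn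
    (f := fun x => (Z*T).eval x) (Polynomial.continuous _).continuousOn
  obtain ⟨B', hB'⟩ : ∃ B' : ℝ, B' = max 1 B := ⟨_, rfl⟩
  have hB1 : 1 ≤ B' := hB' ▸ le_max_left _ _
  have hBB : B ≤ B' := hB' ▸ le_max_right _ _
  obtain ⟨D, hD⟩ : ∃ D, D = S.natDegree + 1 := ⟨_, rfl⟩
  obtain ⟨δ, hδ, M, hM⟩ := absorb r (K*B') D (by omega) hr0 hr1 (by positivity)
  refine ⟨δ, hδ, max M (2*D*(k 0+1)), fun m hm => ?_⟩
  have hexp := hM m ((le_max_left _ _).trans hm)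
  have hm2 : 2*D*(k 0+1) ≤ m := (le_max_right _ _).trans hm
  obtain ⟨n, hn⟩ : ∃ n, n = m/(4*D) := ⟨_, rfl⟩
  rw [← hn] at hexp
  have hn4 : 4*D*n ≤ m := by rw [hn]; exact Nat.mul_div_le m (4*D)
  obtain ⟨g, gd, g0, g1, gmono, gdvd, glow, ghigh⟩ := hstep n
  have hrn : 0 < r^n := by positivity
  have hKe : K * r^n ≤ Real.exp (-(δ*m)) := by
    refine le_trans ?_ hexp
    have : 0 < K * r^n := by positivity
    nlinarith
  have Slt : ∀ x ∈ Set.Icc (a 0) (a (l+1)), x ≠ x₀ → S.eval x < 1 := by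
    intro x hx hne
    rcases le_total x a' with h | h
    · exact (Sout x (Or.inl ⟨hx.1, h⟩)).trans_lt (by linarith)
    rcases le_total b' x with h' | h'
    · exact (Sout x (Or.inr ⟨h', hx.2⟩)).trans_lt (by linarith)
    rw [← Sx0]
    rcases lt_or_gt_of_ne hne with h'' | h''
    · exact Smono ⟨h, h''.le⟩ ⟨by linarith, le_rfl⟩ h''
    · exact Santi ⟨le_rfl, by linarith⟩ ⟨h''.le, h'⟩ h''
  have Smem : ∀ x ∈ Set.Icc (a 0) (a (l+1)), S.eval x ∈ Set.Icc (0:ℝ) 1 := by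
    intro x hx
    refine ⟨Snn x hx, ?_⟩
    by_cases h : x = x₀
    · rw [h, Sx0]
    · exact (Slt x hx h).le
  have Qev : ∀ x, (g.comp S).eval x = g.eval (S.eval x) := fun x => eval_comp
  have gnn : ∀ t ∈ Set.Icc (0:ℝ) 1, 0 ≤ g.eval t := by
    intro t ht
    rw [← g0]
    exact gmono.monotoneOn ⟨le_rfl, zero_le_one⟩ ht ht.1
  have gle : ∀ t ∈ Set.Icc (0:ℝ) 1, g.eval t ≤ 1 := by
    intro t ht
    rw [← g1]
    exact gmono.monotoneOn ht ⟨zero_le_one, le_rfl⟩ ht.2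
  have Qnn : ∀ x ∈ Set.Icc (a 0) (a (l+1)), 0 ≤ (g.comp S).eval x := by
    intro x hx; rw [Qev]; exact gnn _ (Smem x hx)
  refine ⟨g.comp S, ?_, ?_, ?_, ?_, ?_, ?_, ?_, ?_, ?_, Qnn⟩
  · refine natDegree_comp_le.trans ?_
    have : g.natDegree * S.natDegree ≤ (2*n+k 0+1) * D := Nat.mul_le_mul gd (by omega)
    nlinarith
  · rw [Qev, Sx0, g1]
  · intro j hj1 hjk
    rw [iterD]
    obtain ⟨i, rfl⟩ : ∃ i, j = i+1 := ⟨j-1, by omega⟩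
    rw [Function.iterate_succ_apply]
    refine vanish _ x₀ (k 0) i ?_ (by omega)
    rw [derivative_comp]
    refine Dvd.dvd.mul_left ?_ _
    obtain ⟨q, hq⟩ := gdvd
    rw [hq, mul_comp, pow_comp]
    refine Dvd.dvd.mul_right (pow_dvd_pow_of_dvd ?_ _) _
    rw [dvd_iff_isRoot]
    simp [IsRoot, Sx0]
  · intro x hx hne
    rw [abs_of_nonneg (Qnn x hx), Qev, ← g1]
    exact gmono (Smem x hx) ⟨zero_le_one, le_rfl⟩ (Slt x hx hne)
  · intro x hx
    have hx' : x ∈ Set.Icc (a 0) (a (l+1)) := ⟨by linarith [hx.1], by linarith [hx.2]⟩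
    rw [Qev, abs_sub_comm, abs_of_nonneg (sub_nonneg.2 (gle _ (Smem x hx')))]
    exact (ghigh _ ⟨Sin x hx, (Smem x hx').2⟩).trans hKe
  · intro x hx
    have hx' : x ∈ Set.Icc (a 0) (a (l+1)) := by
      rcases hx with hx | hx
      · exact ⟨hx.1, by linarith [hx.2]⟩
      · exact ⟨by linarith [hx.1], hx.2⟩
    rw [abs_of_nonneg (Qnn x hx'), Qev, ← hZev]
    have e1 := glow _ ⟨Snn x hx', Sout x hx⟩
    have e2 : S.eval x ≤ B' * min 1 |Z.eval x| := by
      rw [mul_min_of_nonneg _ _ (by linarith), le_min_iff]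
      refine ⟨by linarith [(Smem x hx').2], ?_⟩
      have h := hB x hx'
      have h' : S.eval x = (Z*T).eval x * Z.eval x := by rw [hT]; simp; ring
      calc S.eval x ≤ |S.eval x| := le_abs_self _
        _ = |(Z*T).eval x| * |Z.eval x| := by rw [h', abs_mul]
        _ ≤ B' * |Z.eval x| := by
          gcongr
          exact h.trans hBB
    calc g.eval (S.eval x) ≤ K * r^n * S.eval x := e1
      _ ≤ K * r^n * (B' * min 1 |Z.eval x|) := by gcongr
      _ = min 1 |Z.eval x| * (K * B' * r^n) := by ring
      _ ≤ _ := by gcongr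
  · left
    intro x hx y hy hxy
    simp only [Qev]
    exact gmono (Smem x ⟨by linarith [hx.1], by linarith [hx.2]⟩) (Smem y ⟨by linarith [hy.1], by linarith [hy.2]⟩)
      (Smono ⟨hx.1, by linarith [hx.2]⟩ ⟨hy.1, by linarith [hy.2]⟩ hxy)
  · right
    intro x hx y hy hxy
    simp only [Qev]
    exact gmono (Smem y ⟨by linarith [hy.1], by linarith [hy.2]⟩) (Smem x ⟨by linarith [hx.1], by linarith [hx.2]⟩)
      (Santi ⟨by linarith [hx.1], hx.2⟩ ⟨by linarith [hy.1], hy.2⟩ hxy)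
  · intro j hj1 hjl κ hκ
    rw [iterD]
    have hkj := hk j hjl
    refine vanish _ (a j) (k j * 2) κ ?_ (by omega)
    have d1 : (X - C (a j))^(k j) ∣ Z := by
      rw [hZdef]
      exact Finset.dvd_prod_of_mem (fun j => (X - C (a j)) ^ k j) (Finset.mem_Icc.2 ⟨hj1, hjl⟩)
    have d2 : (X - C (a j))^(k j * 2) ∣ S := by
      rw [hT, pow_mul]
      exact (pow_dvd_pow_of_dvd d1 2).mul_right _
    refine d2.trans ?_
    obtain ⟨q, hq⟩ : X ∣ g := by rw [X_dvd_iff, coeff_zero_eq_eval_zero, g0]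
    rw [hq, mul_comp, X_comp]
    exact dvd_mul_right _ _
end

section
/- Let t_0, α, β, α', β' ∈ (−π, π) with −π < α' < α < t_0 < β < β' < π, let α_1, …, α_l ∈ (−π, π) \ [α', β'] be points with corresponding positive integer powers k_1, …, k_l, and set Z(t) := ∏_{j=1}^l |sin((t − α_j)/2)|^{k_j}. Then there exists δ_1 > 0 such that for all sufficiently large m there exists a real trigonometric polynomial Q_m of degree at most m satisfying: (i) Q_m(t_0) = 1; (ii) 0 ≤ Q_m(t) < 1 for all t ∈ [−π, π) with t ≠ t_0; (iii) Q_m^{(κ)}(α_j) = 0 for j = 1, …, l and κ = 0, 1, …, k_j; (iv) Q_m(t) ≤ min(1, |Z(t)|)·exp(−δ_1 m) for t ∈ [−π, π] \ (α', β'); (v) |Q_m(t) − 1| ≤ exp(−δ_1 m) for t ∈ [α, β]; (vi) Q_m is strictly monotone on [α', α] and on [β, β']. -/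
open scoped Real

/-- A real trigonometric polynomial of degree at most `n`. -/
def IsTrigPoly (n : ℕ) (T : ℝ → ℝ) : Prop :=
  ∃ A B : ℕ → ℝ,
    T = fun t => ∑ j ∈ Finset.range (n + 1),
      (A j * Real.cos (j * t) + B j * Real.sin (j * t))

lemma itp_congr {n : ℕ} {T S : ℝ → ℝ} (h : IsTrigPoly n T) (e : ∀ t, S t = T t) : IsTrigPoly n S := by
  have : S = T := funext e
  rwa [this]

lemma itp_add {n : ℕ} {T S : ℝ → ℝ} (h : IsTrigPoly n T) (h' : IsTrigPoly n S) :
    IsTrigPoly n (fun t => T t + S t) := by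
  obtain ⟨A, B, rfl⟩ := h
  obtain ⟨A', B', rfl⟩ := h'
  refine ⟨fun j => A j + A' j, fun j => B j + B' j, ?_⟩
  funext t
  rw [← Finset.sum_add_distrib]
  exact Finset.sum_congr rfl (fun j _ => by ring)

lemma itp_smul {n : ℕ} {T : ℝ → ℝ} (c : ℝ) (h : IsTrigPoly n T) :
    IsTrigPoly n (fun t => c * T t) := by
  obtain ⟨A, B, rfl⟩ := h
  refine ⟨fun j => c * A j, fun j => c * B j, ?_⟩
  funext t
  rw [Finset.mul_sum]
  exact Finset.sum_congr rfl (fun j _ => by ring)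

lemma itp_neg {n : ℕ} {T : ℝ → ℝ} (h : IsTrigPoly n T) :
    IsTrigPoly n (fun t => T (-t)) := by
  obtain ⟨A, B, rfl⟩ := h
  refine ⟨A, fun j => - B j, ?_⟩
  funext t
  refine Finset.sum_congr rfl (fun j _ => ?_)
  rw [mul_neg, Real.cos_neg, Real.sin_neg]; ring

lemma itp_cos {n j : ℕ} (h : j ≤ n) : IsTrigPoly n (fun t => Real.cos (j * t)) := by
  refine ⟨fun i => if i = j then 1 else 0, fun _ => 0, ?_⟩
  funext t
  simp [Nat.lt_succ_of_le h]

lemma itp_sin {n j : ℕ} (h : j ≤ n) : IsTrigPoly n (fun t => Real.sin (j * t)) := by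
  refine ⟨fun _ => 0, fun i => if i = j then 1 else 0, ?_⟩
  funext t
  simp [Nat.lt_succ_of_le h]

lemma itp_const (n : ℕ) (c : ℝ) : IsTrigPoly n (fun _ => c) :=
  itp_congr (itp_smul c (itp_cos (n := n) (j := 0) (Nat.zero_le n))) (fun t => by simp)

lemma itp_sum {n : ℕ} {ι : Type} (s : Finset ι) (f : ι → ℝ → ℝ) (h : ∀ i ∈ s, IsTrigPoly n (f i)) :
    IsTrigPoly n (fun t => ∑ i ∈ s, f i t) := by
  classical
  induction s using Finset.induction_on with
  | empty => simpa using itp_const n 0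
  | insert a s ha ih =>
    refine itp_congr (itp_add (h a (Finset.mem_insert_self a s))
      (ih fun i hi => h i (Finset.mem_insert_of_mem hi))) (fun t => ?_)
    rw [Finset.sum_insert ha]

lemma itp_mono {n m : ℕ} (hnm : n ≤ m) {T : ℝ → ℝ} (h : IsTrigPoly n T) : IsTrigPoly m T := by
  obtain ⟨A, B, rfl⟩ := h
  refine itp_sum _ _ (fun j hj => ?_)
  have : j ≤ m := by have := Finset.mem_range.1 hj; omega
  exact itp_add (itp_smul _ (itp_cos this)) (itp_smul _ (itp_sin this))

lemma itp_cos_int {n : ℕ} (j : ℤ) (h : j.natAbs ≤ n) : IsTrigPoly n (fun t => Real.cos (j * t)) := by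
  refine itp_congr (itp_cos h) (fun t => ?_)
  rcases Int.natAbs_eq j with e | e
  · conv_lhs => rw [e]
    simp
  · conv_lhs => rw [e]
    rw [Int.cast_neg, neg_mul, Real.cos_neg]; simp

lemma itp_sin_int {n : ℕ} (j : ℤ) (h : j.natAbs ≤ n) : IsTrigPoly n (fun t => Real.sin (j * t)) := by
  rcases Int.natAbs_eq j with e | e
  · refine itp_congr (itp_sin h) (fun t => ?_)
    conv_lhs => rw [e]
    simp
  · refine itp_congr (itp_smul (-1) (itp_sin h)) (fun t => ?_)
    conv_lhs => rw [e]
    rw [Int.cast_neg, neg_mul, Real.sin_neg]; simp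

lemma itp_mul {n m : ℕ} {T S : ℝ → ℝ} (h : IsTrigPoly n T) (h' : IsTrigPoly m S) :
    IsTrigPoly (n + m) (fun t => T t * S t) := by
  obtain ⟨A, B, rfl⟩ := h
  obtain ⟨A', B', rfl⟩ := h'
  simp only [Finset.sum_mul_sum]
  refine itp_sum _ _ (fun j hj => itp_sum _ _ (fun i hi => ?_))
  have hj := Finset.mem_range.1 hj
  have hi := Finset.mem_range.1 hi
  have c1 : IsTrigPoly (n + m) _ := itp_cos_int ((j : ℤ) + i) (by omega)
  have c2 : IsTrigPoly (n + m) _ := itp_cos_int ((j : ℤ) - i) (by omega)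
  have s1 : IsTrigPoly (n + m) _ := itp_sin_int ((j : ℤ) + i) (by omega)
  have s2 : IsTrigPoly (n + m) _ := itp_sin_int ((j : ℤ) - i) (by omega)
  refine itp_congr (itp_add
    (itp_add (itp_smul ((A j * A' i - B j * B' i) / 2) c1) (itp_smul ((A j * A' i + B j * B' i) / 2) c2))
    (itp_add (itp_smul ((A j * B' i + B j * A' i) / 2) s1) (itp_smul ((B j * A' i - A j * B' i) / 2) s2)))
    (fun t => ?_)
  push_cast
  rw [add_mul (j : ℝ), sub_mul (j : ℝ), Real.cos_add, Real.cos_sub, Real.sin_add, Real.sin_sub]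
  ring

lemma itp_pow {n : ℕ} {T : ℝ → ℝ} (h : IsTrigPoly n T) (k : ℕ) :
    IsTrigPoly (k * n) (fun t => T t ^ k) := by
  induction k with
  | zero => simpa using itp_const 0 1
  | succ k ih =>
    rw [Nat.succ_mul]
    exact itp_congr (itp_mul ih h) (fun t => pow_succ _ _)

lemma itp_poly {n D : ℕ} {T : ℝ → ℝ} (h : IsTrigPoly n T) (P : Polynomial ℝ) (hP : P.natDegree ≤ D) :
    IsTrigPoly (D * n) (fun t => P.eval (T t)) := by
  simp only [Polynomial.eval_eq_sum_range]
  refine itp_sum _ _ (fun i hi => itp_smul _ (itp_mono ?_ (itp_pow h i)))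
  have := Finset.mem_range.1 hi
  exact Nat.mul_le_mul_right _ (by omega)

lemma itp_contDiff {n : ℕ} {T : ℝ → ℝ} (h : IsTrigPoly n T) : ContDiff ℝ (⊤ : ℕ∞) T := by
  obtain ⟨A, B, rfl⟩ := h
  fun_prop

lemma itp_anti {n : ℕ} {T : ℝ → ℝ} (h : IsTrigPoly n T) (h0 : ∫ t in (-π)..π, T t = 0) :
    ∃ V, IsTrigPoly n V ∧ ∀ t, HasDerivAt V (T t) t := by
  have hc : Continuous T := (itp_contDiff h).continuous
  obtain ⟨A, B, hT⟩ := h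
  let V : ℝ → ℝ := fun t => ∑ j ∈ Finset.range (n + 1),
      ((-(B j / j)) * Real.cos (j * t) + (A j / j) * Real.sin (j * t))
  have hV : ∀ t, HasDerivAt V (T t - A 0) t := by
    intro t
    have : T t - A 0 = ∑ j ∈ Finset.range (n + 1),
      ((-(B j / j)) * (-Real.sin (j * t) * j) + (A j / j) * (Real.cos (j * t) * j)) := by
      rw [hT]
      beta_reduce
      rw [Finset.sum_range_succ', Finset.sum_range_succ']
      simp only [Nat.cast_zero, zero_mul, Real.cos_zero, Real.sin_zero, mul_zero, mul_one, add_zero,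
        add_sub_cancel_right]
      refine Finset.sum_congr rfl (fun j _ => ?_)
      have : ((j + 1 : ℕ) : ℝ) ≠ 0 := by positivity
      field_simp
      ring
    rw [this]
    refine HasDerivAt.fun_sum (fun j _ => ?_)
    have hl : HasDerivAt (fun t : ℝ => (j : ℝ) * t) j t := by
      simpa using (hasDerivAt_id t).const_mul (j : ℝ)
    exact (hl.cos.const_mul _).add (hl.sin.const_mul _)
  have hper : V π = V (-π) := by
    simp only [V]
    refine Finset.sum_congr rfl (fun j _ => ?_)
    simp [mul_neg, Real.cos_neg, Real.sin_neg, Real.sin_nat_mul_pi]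
  have hi : ∫ t in (-π)..π, (T t - A 0) = V π - V (-π) :=
    intervalIntegral.integral_eq_sub_of_hasDerivAt (fun t _ => hV t)
      ((hc.sub continuous_const).intervalIntegrable _ _)
  rw [intervalIntegral.integral_sub (hc.intervalIntegrable _ _) (continuous_const.intervalIntegrable _ _),
    h0, hper] at hi
  have hA : A 0 = 0 := by
    have := Real.pi_pos
    rw [intervalIntegral.integral_const, smul_eq_mul] at hi
    have h3 : (π - -π) * A 0 = 0 := by linarith
    rcases mul_eq_zero.1 h3 with h3 | h3
    · linarith
    · exact h3
  refine ⟨V, ⟨_, _, rfl⟩, fun t => by simpa [hA] using hV t⟩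

lemma abs_sin_nat_mul_aux (k : ℕ) (x : ℝ) : |Real.sin (k * x)| ≤ k * |Real.sin x| := by
  induction k with
  | zero => simp
  | succ k ih =>
    push_cast
    rw [add_mul, one_mul, Real.sin_add]
    calc _ ≤ |Real.sin (k * x)| * |Real.cos x| + |Real.cos (k * x)| * |Real.sin x| := by
          rw [← abs_mul, ← abs_mul]; exact abs_add_le _ _
      _ ≤ |Real.sin (k * x)| * 1 + 1 * |Real.sin x| := by
          gcongr
          · exact Real.abs_cos_le_one _
          · exact Real.abs_cos_le_one _
      _ ≤ _ := by linarith

lemma itp_lip {n : ℕ} {T : ℝ → ℝ} (h : IsTrigPoly n T) :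
    ∃ C, 0 ≤ C ∧ ∀ t s, |T t - T s| ≤ C * |Real.sin ((t - s) / 2)| := by
  obtain ⟨A, B, rfl⟩ := h
  refine ⟨∑ j ∈ Finset.range (n + 1), (|A j| * (2 * j) + |B j| * (2 * j)),
    Finset.sum_nonneg fun j _ => by positivity, fun t s => ?_⟩
  rw [← Finset.sum_sub_distrib, Finset.sum_mul]
  refine (Finset.abs_sum_le_sum_abs _ _).trans (Finset.sum_le_sum fun j _ => ?_)
  have e : A j * Real.cos (j * t) + B j * Real.sin (j * t) - (A j * Real.cos (j * s) + B j * Real.sin (j * s))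
    = A j * (Real.cos (j * t) - Real.cos (j * s)) + B j * (Real.sin (j * t) - Real.sin (j * s)) := by ring
  rw [e]
  refine (abs_add_le _ _).trans ?_
  rw [abs_mul, abs_mul, add_mul, mul_assoc, mul_assoc (|B j|)]
  have h1 : |Real.sin ((j * t - j * s) / 2)| ≤ j * |Real.sin ((t - s) / 2)| := by
    have := abs_sin_nat_mul_aux j ((t - s) / 2)
    rwa [show (j : ℝ) * ((t - s) / 2) = (j * t - j * s) / 2 by ring] at this
  gcongr
  · rw [Real.cos_sub_cos, abs_mul, abs_mul]
    have := Real.abs_sin_le_one ((j * t + j * s) / 2)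
    rw [abs_neg, abs_two]
    nlinarith [abs_nonneg (Real.sin ((j * t - j * s) / 2)), abs_nonneg (Real.sin ((j * t + j * s) / 2))]
  · rw [Real.sin_sub_sin, abs_mul, abs_mul]
    have := Real.abs_cos_le_one ((j * t + j * s) / 2)
    rw [abs_two]
    nlinarith [abs_nonneg (Real.sin ((j * t - j * s) / 2)), abs_nonneg (Real.cos ((j * t + j * s) / 2))]

section
open Polynomial

lemma poly_anti (P : ℝ[X]) : ∃ R : ℝ[X], derivative R = P ∧ R.eval 0 = 0 ∧ R.natDegree ≤ P.natDegree + 1 := by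
  refine ⟨∑ i ∈ Finset.range (P.natDegree + 1), C (P.coeff i / (i + 1)) * X ^ (i + 1), ?_, ?_, ?_⟩
  · rw [derivative_sum]
    conv_rhs => rw [P.as_sum_range_C_mul_X_pow]
    refine Finset.sum_congr rfl (fun i _ => ?_)
    rw [derivative_C_mul_X_pow]
    have : (i + 1 : ℝ) ≠ 0 := by positivity
    congr 2
    push_cast
    field_simp
  · simp [eval_finsetSum]
  · refine natDegree_sum_le_of_forall_le _ _ (fun i hi => ?_)
    refine (natDegree_C_mul_X_pow_le _ _).trans ?_
    have := Finset.mem_range.1 hi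
    omega

lemma step_poly (y1 y2 Y : ℝ) (h0 : 0 ≤ y1) (h1 : y1 < y2) (h2 : y2 ≤ Y) (h3 : Y ≤ 1) :
    ∃ c r : ℝ, 0 < c ∧ 0 < r ∧ r < 1 ∧ ∀ N : ℕ, ∃ P : ℝ[X], P.natDegree ≤ 2 * N + 1 ∧
      P.eval 0 = 0 ∧ P.eval Y = 1 ∧ StrictMonoOn (fun y => P.eval y) (Set.Icc 0 1) ∧
      (∀ y ∈ Set.Icc 0 y1, P.eval y ≤ c * r ^ N * y) ∧
      (∀ y ∈ Set.Icc y2 Y, 1 - P.eval y ≤ c * r ^ N) := by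
  set x0 := (y1 + y2) / 2 with hx0
  set η := (y2 - y1) / 4 with hη
  have hη0 : 0 < η := by simp only [hη]; linarith
  have hη1 : η ≤ 1 / 4 := by simp only [hη]; linarith
  have ey1 : y1 = x0 - 2 * η := by simp only [hη, hx0]; ring
  have ey2 : y2 = x0 + 2 * η := by simp only [hη, hx0]; ring
  have hd1 : 0 < 1 - 4 * η ^ 2 := by nlinarith
  have hd2 : 0 < 1 - η ^ 2 := by nlinarith
  refine ⟨1 / (2 * η), (1 - 4 * η ^ 2) / (1 - η ^ 2), by positivity, by positivity, ?_, fun N => ?_⟩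
  · rw [div_lt_one hd2]; nlinarith
  obtain ⟨R, hR, hR0, hRd⟩ := poly_anti ((1 - (X - C x0) ^ 2) ^ N)
  have hder : ∀ x, deriv (fun y => R.eval y) x = (1 - (x - x0) ^ 2) ^ N := by
    intro x
    rw [Polynomial.deriv, hR]; simp
  have hdiff : Differentiable ℝ (fun y => R.eval y) := R.differentiable
  have hmono : StrictMonoOn (fun y => R.eval y) (Set.Icc 0 1) := by
    refine strictMonoOn_of_deriv_pos (convex_Icc _ _) hdiff.continuous.continuousOn (fun x hx => ?_)
    rw [interior_Icc] at hx
    rw [hder]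
    apply pow_pos
    nlinarith [hx.1, hx.2]
  have hlow : 2 * η * (1 - η ^ 2) ^ N ≤ R.eval Y := by
    have k1 : (1 - η ^ 2) ^ N * ((x0 + η) - (x0 - η)) ≤ R.eval (x0 + η) - R.eval (x0 - η) := by
      refine (convex_Icc (x0 - η) (x0 + η)).mul_sub_le_image_sub_of_le_deriv
        hdiff.continuous.continuousOn hdiff.differentiableOn (fun x hx => ?_) _ ⟨le_rfl, by linarith⟩ _
        ⟨by linarith, le_rfl⟩ (by linarith)
      rw [interior_Icc] at hx
      rw [hder]
      refine pow_le_pow_left₀ hd2.le ?_ _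
      nlinarith [hx.1, hx.2]
    have k2 : R.eval 0 ≤ R.eval (x0 - η) :=
      hmono.monotoneOn ⟨le_rfl, zero_le_one⟩ ⟨by linarith, by linarith⟩ (by linarith)
    have k3 : R.eval (x0 + η) ≤ R.eval Y :=
      hmono.monotoneOn ⟨by linarith, by linarith⟩ ⟨by linarith, by linarith⟩ (by linarith)
    nlinarith
  have hpos : 0 < 2 * η * (1 - η ^ 2) ^ N := by positivity
  have hRY : 0 < R.eval Y := hpos.trans_le hlow
  have key : 1 / (2 * η) * ((1 - 4 * η ^ 2) / (1 - η ^ 2)) ^ N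
      = (1 - 4 * η ^ 2) ^ N / (2 * η * (1 - η ^ 2) ^ N) := by
    rw [div_pow]; field_simp
  have key2 : (1 - 4 * η ^ 2) ^ N / R.eval Y ≤ 1 / (2 * η) * ((1 - 4 * η ^ 2) / (1 - η ^ 2)) ^ N := by
    rw [key]
    gcongr
  refine ⟨C (R.eval Y)⁻¹ * R, ?_, ?_, ?_, ?_, ?_, ?_⟩
  · refine (natDegree_C_mul_le _ _).trans (hRd.trans ?_)
    have : ((1 - (X - C x0) ^ 2) ^ N : ℝ[X]).natDegree ≤ N * 2 := by
      refine natDegree_pow_le_of_le N ?_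
      compute_degree
    omega
  · simp [hR0]
  · simp [hRY.ne']
  · intro a ha b hb hab
    simp only [eval_mul, eval_C]
    exact mul_lt_mul_of_pos_left (hmono ha hb hab) (by positivity)
  · intro y hy
    simp only [eval_mul, eval_C]
    have k1 : R.eval y - R.eval 0 ≤ (1 - 4 * η ^ 2) ^ N * (y - 0) := by
      refine (convex_Icc 0 y1).image_sub_le_mul_sub_of_deriv_le
        hdiff.continuous.continuousOn hdiff.differentiableOn (fun x hx => ?_) _ ⟨le_rfl, by linarith⟩ _
        hy hy.1
      rw [interior_Icc] at hx
      rw [hder]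
      refine pow_le_pow_left₀ ?_ ?_ _
      · nlinarith [hx.1, hx.2]
      · nlinarith [hx.1, hx.2]
    rw [hR0, sub_zero, sub_zero] at k1
    calc (R.eval Y)⁻¹ * R.eval y ≤ (R.eval Y)⁻¹ * ((1 - 4 * η ^ 2) ^ N * y) := by gcongr
      _ = (1 - 4 * η ^ 2) ^ N / R.eval Y * y := by rw [div_eq_mul_inv]; ring
      _ ≤ _ := mul_le_mul_of_nonneg_right key2 hy.1
  · intro y hy
    simp only [eval_mul, eval_C]
    have k1 : R.eval Y - R.eval y ≤ (1 - 4 * η ^ 2) ^ N * (Y - y) := by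
      refine (convex_Icc y2 Y).image_sub_le_mul_sub_of_deriv_le
        hdiff.continuous.continuousOn hdiff.differentiableOn (fun x hx => ?_) _ hy _
        ⟨h2, le_rfl⟩ hy.2
      rw [interior_Icc] at hx
      rw [hder]
      refine pow_le_pow_left₀ ?_ ?_ _
      · nlinarith [hx.1, hx.2]
      · nlinarith [hx.1, hx.2]
    have k2 : (1 - 4 * η ^ 2) ^ N * (Y - y) ≤ (1 - 4 * η ^ 2) ^ N := by
      refine mul_le_of_le_one_right (by positivity) ?_
      linarith [hy.1]
    calc 1 - (R.eval Y)⁻¹ * R.eval y = (R.eval Y - R.eval y) / R.eval Y := by field_simp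
      _ ≤ (1 - 4 * η ^ 2) ^ N / R.eval Y := by gcongr; linarith
      _ ≤ _ := key2

lemma zero_poly {ι : Type} (J : Finset ι) (c : ι → ℝ) (K : ℕ) (p q : ℝ) (hp : 0 < p) (hpq : p < q)
    (hq : q ≤ 1) (hc : ∀ j ∈ J, 0 ≤ c j ∧ c j < p) :
    ∃ (D : ℕ) (M r : ℝ), 0 < M ∧ 0 < r ∧ r < 1 ∧ ∀ N : ℕ, ∃ H : ℝ[X], H.natDegree ≤ D * (N + 1) ∧
      H.eval 1 = 1 ∧ (∀ x ∈ Set.Icc (0 : ℝ) 1, 0 ≤ H.eval x) ∧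
      (∀ x ∈ Set.Ico (0 : ℝ) 1, H.eval x < 1) ∧
      StrictMonoOn (fun y => H.eval y) (Set.Icc p 1) ∧
      (∀ x ∈ Set.Icc 0 p, H.eval x ≤ M * r ^ N * ∏ j ∈ J, |x - c j| ^ (2 * K)) ∧
      (∀ x ∈ Set.Icc q 1, 1 - H.eval x ≤ M * r ^ N) ∧
      (∀ j ∈ J, (X - C (c j)) ^ (2 * K) ∣ H) := by
  have hq0 : 0 < q := hp.trans hpq
  set W : ℝ → ℝ := fun x => ∏ j ∈ J, (x - c j) ^ (2 * K) with hW
  have hWq : 0 < W q := Finset.prod_pos fun j hj => pow_pos (by linarith [(hc j hj).2]) _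
  obtain ⟨n, hn⟩ : ∃ n : ℕ, (p / q) ^ n < W q :=
    exists_pow_lt_of_lt_one hWq ((div_lt_one hq0).2 hpq)
  have hn' : p ^ (n + 1) < q ^ (n + 1) * W q := by
    have e : p ^ (n + 1) = q ^ (n + 1) * (p / q) ^ (n + 1) := by
      rw [← mul_pow]; congr 1; field_simp
    rw [e]
    refine mul_lt_mul_of_pos_left (lt_of_le_of_lt ?_ hn) (by positivity)
    exact pow_le_pow_of_le_one (by positivity) ((div_lt_one hq0).2 hpq).le (Nat.le_succ n)
  set F : ℝ[X] := X ^ (n + 1) * ∏ j ∈ J, (X - C (c j)) ^ (2 * K) with hF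
  have eF : ∀ x, F.eval x = x ^ (n + 1) * W x := by
    intro x
    simp [hF, hW, eval_prod]
  have W0 : ∀ x, 0 ≤ W x := fun x => Finset.prod_nonneg fun j _ => by
    rw [pow_mul]; positivity
  have Wabs : ∀ x, W x = ∏ j ∈ J, |x - c j| ^ (2 * K) := fun x =>
    Finset.prod_congr rfl fun j _ => by rw [pow_mul, pow_mul, sq_abs]
  have W1 : ∀ x ∈ Set.Icc (0 : ℝ) 1, W x ≤ 1 := by
    intro x hx
    rw [Wabs]
    refine Finset.prod_le_one (fun j _ => by positivity) (fun j hj => pow_le_one₀ (abs_nonneg _) ?_)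
    have := hc j hj
    rw [abs_le]; constructor <;> linarith [hx.1, hx.2]
  have F0 : ∀ x ∈ Set.Icc (0 : ℝ) 1, 0 ≤ F.eval x := fun x hx => by
    rw [eF]; exact mul_nonneg (pow_nonneg hx.1 _) (W0 x)
  have F1 : ∀ x ∈ Set.Icc (0 : ℝ) 1, F.eval x ≤ 1 := fun x hx => by
    rw [eF]; exact mul_le_one₀ (pow_le_one₀ hx.1 hx.2) (W0 x) (W1 x hx)
  have FW : ∀ x ∈ Set.Icc (0 : ℝ) 1, F.eval x ≤ W x := fun x hx => by
    rw [eF]; exact mul_le_of_le_one_left (W0 x) (pow_le_one₀ hx.1 hx.2)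
  have Fm : StrictMonoOn (fun y => F.eval y) (Set.Icc p 1) := by
    intro a ha b hb hab
    simp only [eF]
    refine mul_lt_mul (pow_lt_pow_left₀ hab (hp.le.trans ha.1) (Nat.succ_ne_zero n)) ?_ ?_
      (pow_nonneg (hp.le.trans hb.1) _)
    · refine Finset.prod_le_prod (fun j _ => by rw [pow_mul]; positivity) (fun j hj => ?_)
      refine pow_le_pow_left₀ ?_ (by linarith) _
      linarith [ha.1, (hc j hj).2]
    · exact Finset.prod_pos fun j hj => pow_pos (by linarith [(hc j hj).2, ha.1]) _
  have Fp : ∀ x ∈ Set.Icc 0 p, F.eval x ≤ p ^ (n + 1) := by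
    intro x hx
    rw [eF]
    calc _ ≤ x ^ (n + 1) * 1 := mul_le_mul_of_nonneg_left (W1 x ⟨hx.1, by linarith [hx.2]⟩) (pow_nonneg hx.1 _)
      _ ≤ _ := by rw [mul_one]; exact pow_le_pow_left₀ hx.1 hx.2 _
  rw [← eF] at hn'
  have Fq1 : F.eval q ≤ F.eval 1 := Fm.monotoneOn ⟨hpq.le, hq⟩ ⟨by linarith, le_rfl⟩ hq
  obtain ⟨M, r, hM, hr, hr1, hP⟩ := step_poly (p ^ (n + 1)) (F.eval q) (F.eval 1) (by positivity) hn'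
    Fq1 (F1 1 ⟨zero_le_one, le_rfl⟩)
  refine ⟨2 * F.natDegree + 1, M, r, hM, hr, hr1, fun N => ?_⟩
  obtain ⟨P, hPd, hP0, hP1, hPm, hPs, hPl⟩ := hP N
  have mem : ∀ x ∈ Set.Icc (0 : ℝ) 1, F.eval x ∈ Set.Icc (0 : ℝ) 1 := fun x hx => ⟨F0 x hx, F1 x hx⟩
  refine ⟨P.comp F, ?_, ?_, ?_, ?_, ?_, ?_, ?_, ?_⟩
  · rw [natDegree_comp]
    nlinarith [Nat.mul_le_mul_right F.natDegree hPd]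
  · simp [hP1]
  · intro x hx
    rw [eval_comp, ← hP0]
    exact hPm.monotoneOn ⟨le_rfl, zero_le_one⟩ (mem x hx) (F0 x hx)
  · intro x hx
    rw [eval_comp, ← hP1]
    refine hPm (mem x ⟨hx.1, hx.2.le⟩) (mem 1 ⟨zero_le_one, le_rfl⟩) ?_
    rcases le_total x p with h | h
    · exact ((Fp x ⟨hx.1, h⟩).trans_lt hn').trans_le Fq1
    · exact Fm ⟨h, hx.2.le⟩ ⟨by linarith, le_rfl⟩ hx.2
  · intro a ha b hb hab
    simp only [eval_comp]
    exact hPm (mem a ⟨by linarith [ha.1], ha.2⟩) (mem b ⟨by linarith [hb.1], hb.2⟩) (Fm ha hb hab)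
  · intro x hx
    have hx' : x ∈ Set.Icc (0 : ℝ) 1 := ⟨hx.1, by linarith [hx.2]⟩
    rw [eval_comp, ← Wabs]
    refine (hPs _ ⟨F0 x hx', Fp x hx⟩).trans ?_
    exact mul_le_mul_of_nonneg_left (FW x hx') (by positivity)
  · intro x hx
    rw [eval_comp]
    exact hPl _ ⟨Fm.monotoneOn ⟨hpq.le, hq⟩ ⟨by linarith [hx.1], hx.2⟩ hx.1,
      Fm.monotoneOn ⟨by linarith [hx.1], hx.2⟩ ⟨by linarith, le_rfl⟩ hx.2⟩
  · intro j hj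
    have hdP : X ∣ P := by
      rw [X_dvd_iff, coeff_zero_eq_eval_zero, hP0]
    obtain ⟨S, hS⟩ := hdP
    rw [hS, mul_comp, X_comp]
    exact Dvd.dvd.mul_right ((Finset.dvd_prod_of_mem (fun j => (X - C (c j)) ^ (2 * K)) hj).mul_left _) _

lemma iter_zero (f : ℝ → ℝ) (hf : ContDiff ℝ (⊤ : ℕ∞) f) (a : ℝ) (ha : f a = 0) (κ : ℕ) :
    ∀ (n : ℕ) (g : ℝ → ℝ), ContDiff ℝ (⊤ : ℕ∞) g → κ < n →
      iteratedDeriv κ (fun t => f t ^ n * g t) a = 0 := by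
  induction κ with
  | zero =>
    intro n g _ hn
    simp [ha, hn.ne']
  | succ κ ih =>
    intro n g hg hn
    obtain ⟨n, rfl⟩ : ∃ k, n = k + 1 := ⟨n - 1, by omega⟩
    rw [iteratedDeriv_succ']
    have hf1 : ContDiff ℝ (⊤ : ℕ∞) (deriv f) := (contDiff_infty_iff_deriv.1 hf).2
    have hg1 : ContDiff ℝ (⊤ : ℕ∞) (deriv g) := (contDiff_infty_iff_deriv.1 hg).2
    have hfd := (contDiff_infty_iff_deriv.1 hf).1
    have hgd := (contDiff_infty_iff_deriv.1 hg).1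
    have e : deriv (fun t => f t ^ (n + 1) * g t)
        = fun t => f t ^ n * ((n + 1 : ℝ) * deriv f t * g t + f t * deriv g t) := by
      funext t
      have := (((hfd t).hasDerivAt.fun_pow (n + 1)).fun_mul (hgd t).hasDerivAt).deriv
      rw [this]
      push_cast
      ring
    rw [e]
    refine ih n _ ?_ (by omega)
    exact ((contDiff_const.mul hf1).mul hg).add (hf.mul hg1)

end

section
open MeasureTheory Filter Topology

lemma bump_peak (x : ℝ) (hx : x ∈ Set.Ioo (-π) π) (g : ℝ → ℝ) (hg : IntegrableOn g (Set.Icc (-π) π))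
    (hc : ContinuousAt g x) :
    Tendsto (fun n : ℕ => (∫ t in Set.Icc (-π) π, (2 + Real.cos (t - x)) ^ n)⁻¹ *
      ∫ t in Set.Icc (-π) π, (2 + Real.cos (t - x)) ^ n * g t) atTop (𝓝 (g x)) := by
  have hpi := Real.pi_pos
  refine tendsto_setIntegral_pow_smul_of_unique_maximum_of_isCompact_of_integrableOn
    (c := fun t => 2 + Real.cos (t - x)) isCompact_Icc
    (by fun_prop) ?_ ?_ ?_ ?_ hg hc.continuousWithinAt
  · intro y hy hne
    have h1 : Real.cos (y - x) ≠ 1 := by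
      intro h
      rw [Real.cos_eq_one_iff_of_lt_of_lt (by linarith [hy.1, hx.2]) (by linarith [hy.2, hx.1])] at h
      exact hne (by linarith)
    have h2 := lt_of_le_of_ne (Real.cos_le_one (y - x)) h1
    simp only [sub_self, Real.cos_zero]
    linarith
  · intro t _
    linarith [Real.neg_one_le_cos (t - x)]
  · simp; norm_num
  · rw [interior_Icc, closure_Ioo (by linarith)]
    exact ⟨hx.1.le, hx.2.le⟩

lemma bump_itp (x : ℝ) (n : ℕ) : IsTrigPoly n (fun t => (2 + Real.cos (t - x)) ^ n) := by
  have h : IsTrigPoly 1 (fun t => 2 + Real.cos (t - x)) := by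
    refine itp_congr (itp_add (itp_const 1 2) (itp_add (itp_smul (Real.cos x) (itp_cos (le_refl 1)))
      (itp_smul (Real.sin x) (itp_sin (le_refl 1))))) (fun t => ?_)
    rw [Real.cos_sub]; simp; ring
  simpa using itp_pow h n

lemma bump_seq (x : ℝ) (hx : x ∈ Set.Ioo (-π) π) : ∃ k : ℕ → ℝ → ℝ, (∀ n, IsTrigPoly n (k n)) ∧
    (∀ n t, 0 < k n t) ∧ ∀ g : ℝ → ℝ, IntegrableOn g (Set.Icc (-π) π) → ContinuousAt g x →
    Tendsto (fun n : ℕ => ∫ t in Set.Icc (-π) π, k n t * g t) atTop (𝓝 (g x)) := by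
  have hpi := Real.pi_pos
  have hpos : ∀ (n : ℕ) t, 0 < (2 + Real.cos (t - x)) ^ n :=
    fun n t => pow_pos (by linarith [Real.neg_one_le_cos (t - x)]) _
  refine ⟨fun n t => (∫ t in Set.Icc (-π) π, (2 + Real.cos (t - x)) ^ n)⁻¹ * (2 + Real.cos (t - x)) ^ n,
    fun n => itp_smul _ (bump_itp x n), fun n t => ?_, fun g hg hc => ?_⟩
  · refine mul_pos (inv_pos.2 ?_) (hpos n t)
    rw [integral_Icc_eq_integral_Ioc, ← intervalIntegral.integral_of_le (by linarith)]
    refine intervalIntegral.intervalIntegral_pos_of_pos (Continuous.intervalIntegrable (by fun_prop) _ _)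
      (hpos n) (by linarith)
  · refine (bump_peak x hx g hg hc).congr (fun n => ?_)
    rw [← integral_const_mul]
    simp only [mul_assoc]

lemma bump_K (φ : ℝ → ℝ) (hφc : Continuous φ) (p q a b : ℝ) (hp : -π < p) (hq : q < π)
    (ha : a ∈ Set.Ioo p q) (hb : b ∈ Set.Ioo q π) (pa : 0 < φ a) (nb : φ b < 0) :
    ∃ (N : ℕ) (K : ℝ → ℝ), IsTrigPoly N K ∧ (∀ t, 0 < K t) ∧
      ∫ t in (-π)..π, K t * φ t = 0 ∧ 0 < ∫ t in p..q, K t * φ t := by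
  have hpi := Real.pi_pos
  have hpq : p < q := ha.1.trans ha.2
  obtain ⟨k, hk1, hk2, hk3⟩ := bump_seq a ⟨by linarith [ha.1], by linarith [ha.2]⟩
  obtain ⟨m, hm1, hm2, hm3⟩ := bump_seq b ⟨by linarith [hb.1], by linarith [hb.2]⟩
  have hφi : IntegrableOn φ (Set.Icc (-π) π) := hφc.continuousOn.integrableOn_compact isCompact_Icc
  obtain ⟨g, hg⟩ : ∃ g : ℝ → ℝ, g = Set.indicator (Set.Ioc p q) φ := ⟨_, rfl⟩
  have hgi : IntegrableOn g (Set.Icc (-π) π) := hg ▸ hφi.indicator measurableSet_Ioc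
  have hga : g =ᶠ[𝓝 a] φ := by
    filter_upwards [Ioo_mem_nhds ha.1 ha.2] with t ht
    rw [hg]
    exact Set.indicator_of_mem (show t ∈ Set.Ioc p q from ⟨ht.1, ht.2.le⟩) φ
  have hgb : g =ᶠ[𝓝 b] fun _ => 0 := by
    filter_upwards [Ioi_mem_nhds hb.1] with t ht
    rw [hg]
    exact Set.indicator_of_notMem (show t ∉ Set.Ioc p q from fun h => absurd h.2 (not_le.2 ht)) φ
  have la := hk3 φ hφi hφc.continuousAt
  have lb := hm3 φ hφi hφc.continuousAt
  have ga := hk3 g hgi (hφc.continuousAt.congr hga.symm)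
  have gb := hm3 g hgi (continuousAt_const.congr hgb.symm)
  rw [hga.eq_of_nhds] at ga
  rw [hgb.eq_of_nhds] at gb
  have hcomb := (lb.neg.mul ga).add (la.mul gb)
  have hlim : 0 < -φ b * φ a + φ a * 0 := by nlinarith
  obtain ⟨N, hN1, hN2, hN3⟩ := ((la.eventually (lt_mem_nhds pa)).and
    ((lb.eventually (gt_mem_nhds nb)).and (hcomb.eventually (lt_mem_nhds hlim)))).exists
  obtain ⟨A, hA⟩ : ∃ A, A = -(∫ t in Set.Icc (-π) π, m N t * φ t) := ⟨_, rfl⟩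
  obtain ⟨B, hB⟩ : ∃ B, B = ∫ t in Set.Icc (-π) π, k N t * φ t := ⟨_, rfl⟩
  rw [← hA, ← hB] at hN3
  rw [← hB] at hN1
  have Ap : 0 < A := by rw [hA]; exact neg_pos.2 hN2
  have hkc : Continuous (k N) := (itp_contDiff (hk1 N)).continuous
  have hmc : Continuous (m N) := (itp_contDiff (hm1 N)).continuous
  have hint : ∀ f : ℝ → ℝ, IntegrableOn f (Set.Icc (-π) π) →
      ∫ t in Set.Icc (-π) π, (A * k N t + B * m N t) * f t = A * (∫ t in Set.Icc (-π) π, k N t * f t)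
        + B * ∫ t in Set.Icc (-π) π, m N t * f t := by
    intro f hf
    rw [← integral_const_mul, ← integral_const_mul, ← integral_add]
    · refine integral_congr_ae (Eventually.of_forall fun t => ?_)
      beta_reduce; ring
    · exact (hf.continuousOn_mul hkc.continuousOn isCompact_Icc).const_mul _
    · exact (hf.continuousOn_mul hmc.continuousOn isCompact_Icc).const_mul _
  refine ⟨N, fun t => A * k N t + B * m N t, itp_add (itp_smul _ (hk1 N)) (itp_smul _ (hm1 N)),
    fun t => add_pos (mul_pos Ap (hk2 N t)) (mul_pos hN1 (hm2 N t)), ?_, ?_⟩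
  · rw [intervalIntegral.integral_of_le (by linarith), ← integral_Icc_eq_integral_Ioc, hint φ hφi, ← hB]
    rw [hA]; ring
  · have e : ∫ t in p..q, (A * k N t + B * m N t) * φ t
        = ∫ t in Set.Icc (-π) π, (A * k N t + B * m N t) * g t := by
      rw [intervalIntegral.integral_of_le (by linarith)]
      have : (fun t => (A * k N t + B * m N t) * g t)
          = Set.indicator (Set.Ioc p q) (fun t => (A * k N t + B * m N t) * φ t) := by
        funext t
        simp only [hg, Set.indicator]
        split_ifs <;> simp
      rw [this, setIntegral_indicator measurableSet_Ioc]
      congr 2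
      ext t
      simp only [Set.mem_inter_iff, Set.mem_Icc, Set.mem_Ioc]
      constructor
      · intro h; exact ⟨⟨by linarith [h.1], by linarith [h.2]⟩, h⟩
      · exact fun h => h.2
    rw [e, hint g hgi]
    exact hN3

lemma bump_v (p t₀ q : ℝ) (h1 : -π < p) (h2 : p < t₀) (h3 : t₀ < q) (h4 : q < π) :
    ∃ (n : ℕ) (v : ℝ → ℝ), IsTrigPoly n v ∧ v (-π) = 0 ∧ v π = 0 ∧ v t₀ = 1 ∧
      StrictMonoOn v (Set.Icc (-π) t₀) ∧ StrictAntiOn v (Set.Icc t₀ π) ∧ v p < v q := by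
  have hpi := Real.pi_pos
  obtain ⟨φ, hφ⟩ : ∃ φ : ℝ → ℝ, φ = fun t => Real.sin ((t₀ - t) / 2) * Real.cos (t / 2) := ⟨_, rfl⟩
  have hφc : Continuous φ := by simp only [hφ]; fun_prop
  have hφpos : ∀ t ∈ Set.Ioo (-π) t₀, 0 < φ t := by
    intro t ht
    rw [hφ]
    refine mul_pos (Real.sin_pos_of_pos_of_lt_pi (by linarith [ht.2]) (by linarith [ht.1])) ?_
    exact Real.cos_pos_of_mem_Ioo ⟨by linarith [ht.1], by linarith [ht.2]⟩
  have hφneg : ∀ t ∈ Set.Ioo t₀ π, φ t < 0 := by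
    intro t ht
    rw [hφ]
    refine mul_neg_of_neg_of_pos (Real.sin_neg_of_neg_of_neg_pi_lt (by linarith [ht.1]) (by linarith [ht.2])) ?_
    exact Real.cos_pos_of_mem_Ioo ⟨by linarith [ht.1], by linarith [ht.2]⟩
  have hφt : IsTrigPoly 1 φ := by
    refine itp_congr (itp_add (itp_const 1 (Real.sin (t₀ / 2) / 2))
      (itp_add (itp_smul (Real.sin (t₀ / 2) / 2) (itp_cos (le_refl 1)))
        (itp_smul (-(Real.cos (t₀ / 2) / 2)) (itp_sin (le_refl 1))))) (fun t => ?_)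
    have e1 : ((1 : ℕ) : ℝ) * t = 2 * (t / 2) := by push_cast; ring
    rw [e1, Real.cos_two_mul, Real.sin_two_mul]
    simp only [hφ]
    rw [sub_div, Real.sin_sub]; ring
  obtain ⟨N, K, hK, Kpos, int0, intg⟩ := bump_K φ hφc p q ((p + t₀) / 2) ((q + π) / 2) h1 h4
    ⟨by linarith, by linarith⟩ ⟨by linarith, by linarith⟩ (hφpos _ ⟨by linarith, by linarith⟩)
    (hφneg _ ⟨by linarith, by linarith⟩)
  have Kc : Continuous K := (itp_contDiff hK).continuous
  have hT : IsTrigPoly (N + 1) (fun t => K t * φ t) :=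
    itp_mul hK hφt
  obtain ⟨V, hV, hVd⟩ := itp_anti hT int0
  have hVc : Continuous V := (itp_contDiff hV).continuous
  have ftc : ∀ x y, ∫ t in x..y, K t * φ t = V y - V x := fun x y =>
    intervalIntegral.integral_eq_sub_of_hasDerivAt (fun t _ => hVd t) ((Kc.mul hφc).intervalIntegrable _ _)
  have hper : V π = V (-π) := by have := ftc (-π) π; linarith
  have hpq : V p < V q := by have := ftc p q; linarith
  have hm : StrictMonoOn V (Set.Icc (-π) t₀) := by
    refine strictMonoOn_of_deriv_pos (convex_Icc _ _) hVc.continuousOn (fun x hx => ?_)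
    rw [interior_Icc] at hx
    rw [(hVd x).deriv]
    exact mul_pos (Kpos x) (hφpos x hx)
  have han : StrictAntiOn V (Set.Icc t₀ π) := by
    refine strictAntiOn_of_deriv_neg (convex_Icc _ _) hVc.continuousOn (fun x hx => ?_)
    rw [interior_Icc] at hx
    rw [(hVd x).deriv]
    exact mul_neg_of_pos_of_neg (Kpos x) (hφneg x hx)
  have h0 : V (-π) < V t₀ := hm ⟨le_rfl, by linarith⟩ ⟨by linarith, le_rfl⟩ (by linarith)
  have hs : 0 < (V t₀ - V (-π))⁻¹ := by
    rw [inv_pos]; linarith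
  refine ⟨N + 1, fun t => (V t₀ - V (-π))⁻¹ * (V t + (- V (-π))), itp_smul _ (itp_add hV (itp_const _ _)),
    by simp, by simp [hper], ?_, ?_, ?_, ?_⟩
  · have : V t₀ - V (-π) ≠ 0 := by linarith
    beta_reduce
    field_simp
    ring
  · intro x hx y hy hxy
    exact mul_lt_mul_of_pos_left (by linarith [hm hx hy hxy]) hs
  · intro x hx y hy hxy
    exact mul_lt_mul_of_pos_left (by linarith [han hx hy hxy]) hs
  · exact mul_lt_mul_of_pos_left (by linarith) hs

end

lemma half (J : Finset ℕ) (s : ℕ → ℝ) (K : ℕ) (t₀ α β α' β' : ℝ)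
    (h0 : -π < α') (h1 : α' < α) (h2 : α < t₀) (h3 : t₀ < β) (h4 : β < β') (h5 : β' < π)
    (hs : ∀ j ∈ J, -π < s j ∧ s j < α') :
    ∃ (D : ℕ) (M r : ℝ), 0 < M ∧ 0 < r ∧ r < 1 ∧ ∀ N : ℕ, ∃ q : ℝ → ℝ, IsTrigPoly (D * (N + 1)) q ∧
      q t₀ = 1 ∧ (∀ t ∈ Set.Icc (-π) π, 0 ≤ q t ∧ (t ≠ t₀ → q t < 1)) ∧
      (∀ j ∈ J, ∃ f g : ℝ → ℝ, ContDiff ℝ (⊤ : ℕ∞) f ∧ ContDiff ℝ (⊤ : ℕ∞) g ∧ f (s j) = 0 ∧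
        ∀ t, q t = f t ^ (2 * K) * g t) ∧
      (∀ t ∈ Set.Icc (-π) α', q t ≤ M * r ^ N ∧
        q t ≤ M * r ^ N * ∏ j ∈ J, |Real.sin ((t - s j) / 2)| ^ (2 * K)) ∧
      (∀ t ∈ Set.Icc α β, 1 - q t ≤ M * r ^ N) ∧
      StrictMonoOn q (Set.Icc α' t₀) ∧ StrictAntiOn q (Set.Icc t₀ β') := by
  obtain ⟨n, v, hv, va, vb, v1, vm, van, vpq⟩ := bump_v α' t₀ β' h0 (by linarith) (by linarith) h5
  have v0 : ∀ t ∈ Set.Icc (-π) π, 0 ≤ v t := by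
    intro t ht
    rcases le_total t t₀ with h | h
    · rw [← va]; exact vm.monotoneOn ⟨le_rfl, by linarith⟩ ⟨ht.1, h⟩ ht.1
    · rw [← vb]; exact van.antitoneOn ⟨h, ht.2⟩ ⟨by linarith, le_rfl⟩ ht.2
  have vl : ∀ t ∈ Set.Icc (-π) π, t ≠ t₀ → v t < 1 := by
    intro t ht hne
    rcases lt_or_gt_of_ne hne with h | h
    · rw [← v1]; exact vm ⟨ht.1, h.le⟩ ⟨by linarith, le_rfl⟩ h
    · rw [← v1]; exact van ⟨le_rfl, by linarith⟩ ⟨h.le, ht.2⟩ h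
  have vle : ∀ t ∈ Set.Icc (-π) π, v t ≤ 1 := by
    intro t ht
    by_cases h : t = t₀
    · rw [h, v1]
    · exact (vl t ht h).le
  have hp : 0 < v α' := by
    rw [← va]; exact vm ⟨le_rfl, by linarith⟩ ⟨by linarith, by linarith⟩ h0
  have hpq : v α' < min (v α) (v β) := by
    refine lt_min (vm ⟨by linarith, by linarith⟩ ⟨by linarith, by linarith⟩ h1) (vpq.trans ?_)
    exact van ⟨by linarith, by linarith⟩ ⟨by linarith, by linarith⟩ h4
  have hq : min (v α) (v β) ≤ 1 := (min_le_left _ _).trans (vle α ⟨by linarith, by linarith⟩)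
  have hpI : ∀ t ∈ Set.Icc α' β', v t ∈ Set.Icc (v α') 1 := by
    intro t ht
    refine ⟨?_, vle t ⟨by linarith [ht.1], by linarith [ht.2]⟩⟩
    rcases le_total t t₀ with h | h
    · exact vm.monotoneOn ⟨by linarith, by linarith⟩ ⟨by linarith [ht.1], h⟩ ht.1
    · exact vpq.le.trans (van.antitoneOn ⟨h, by linarith [ht.2]⟩ ⟨by linarith, by linarith⟩ ht.2)
  have hqI : ∀ t ∈ Set.Icc α β, v t ∈ Set.Icc (min (v α) (v β)) 1 := by
    intro t ht
    refine ⟨?_, vle t ⟨by linarith [ht.1], by linarith [ht.2]⟩⟩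
    rcases le_total t t₀ with h | h
    · exact (min_le_left _ _).trans
        (vm.monotoneOn ⟨by linarith, by linarith⟩ ⟨by linarith [ht.1], h⟩ ht.1)
    · exact (min_le_right _ _).trans
        (van.antitoneOn ⟨h, by linarith [ht.2]⟩ ⟨by linarith, by linarith⟩ ht.2)
  obtain ⟨L, hL, hLip⟩ := itp_lip hv
  obtain ⟨D, M, r, hM, hr, hr1, hH⟩ := zero_poly J (fun j => v (s j)) K (v α') (min (v α) (v β)) hp hpq hq
    (fun j hj => ⟨v0 _ ⟨(hs j hj).1.le, by linarith [(hs j hj).2]⟩,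
      vm ⟨(hs j hj).1.le, by linarith [(hs j hj).2]⟩ ⟨h0.le, by linarith⟩ (hs j hj).2⟩)
  obtain ⟨R, hR⟩ : ∃ R : ℝ, R = ∏ j ∈ J, L ^ (2 * K) := ⟨_, rfl⟩
  have hR0 : 0 ≤ R := hR ▸ Finset.prod_nonneg fun j _ => by positivity
  refine ⟨D * n, M * (1 + R), r, by positivity, hr, hr1, fun N => ?_⟩
  obtain ⟨H, Hd, H1, Hnn, Hlt, Hm, Hs, Hl, Hdvd⟩ := hH N
  have hMr : 0 ≤ M * r ^ N := by positivity
  have hMM : M * r ^ N ≤ M * (1 + R) * r ^ N := by nlinarith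
  refine ⟨fun t => H.eval (v t), ?_, ?_, ?_, ?_, ?_, ?_, ?_, ?_⟩
  · have := itp_poly hv H Hd
    rwa [show D * n * (N + 1) = D * (N + 1) * n by ring]
  · simp only [v1, H1]
  · intro t ht
    exact ⟨Hnn _ ⟨v0 t ht, vle t ht⟩, fun hne => Hlt _ ⟨v0 t ht, vl t ht hne⟩⟩
  · intro j hj
    obtain ⟨S, hS⟩ := Hdvd j hj
    have hvC := itp_contDiff hv
    refine ⟨fun t => v t - v (s j), fun t => S.eval (v t), hvC.sub contDiff_const, ?_, by simp, ?_⟩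
    · exact itp_contDiff (itp_poly hv S le_rfl)
    · intro t
      rw [hS]; simp
  · intro t ht
    have ht' : t ∈ Set.Icc (-π) π := ⟨ht.1, by linarith [ht.2]⟩
    have hb := Hs (v t) ⟨v0 t ht', vm.monotoneOn ⟨ht.1, by linarith [ht.2]⟩ ⟨h0.le, by linarith⟩ ht.2⟩
    constructor
    · refine hb.trans (le_trans (mul_le_of_le_one_right hMr ?_) hMM)
      refine Finset.prod_le_one (fun j _ => by positivity) (fun j hj => pow_le_one₀ (abs_nonneg _) ?_)
      have hj' : s j ∈ Set.Icc (-π) π := ⟨(hs j hj).1.le, by linarith [(hs j hj).2]⟩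
      rw [abs_le]
      constructor <;> linarith [v0 t ht', vle t ht', v0 _ hj', vle _ hj']
    · have h6 : ∏ j ∈ J, |v t - v (s j)| ^ (2 * K) ≤ R * ∏ j ∈ J, |Real.sin ((t - s j) / 2)| ^ (2 * K) := by
        rw [hR, ← Finset.prod_mul_distrib]
        refine Finset.prod_le_prod (fun j _ => by positivity) (fun j _ => ?_)
        rw [← mul_pow]
        exact pow_le_pow_left₀ (abs_nonneg _) (hLip t (s j)) _
      have h7 : 0 ≤ ∏ j ∈ J, |Real.sin ((t - s j) / 2)| ^ (2 * K) :=
        Finset.prod_nonneg fun j _ => by positivity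
      calc H.eval (v t) ≤ M * r ^ N * (R * ∏ j ∈ J, |Real.sin ((t - s j) / 2)| ^ (2 * K)) :=
            hb.trans (mul_le_mul_of_nonneg_left h6 hMr)
        _ ≤ M * r ^ N * ((1 + R) * ∏ j ∈ J, |Real.sin ((t - s j) / 2)| ^ (2 * K)) := by
            gcongr; linarith
        _ = _ := by ring
  · intro t ht
    exact (Hl _ (hqI t ht)).trans hMM
  · intro x hx y hy hxy
    exact Hm (hpI x ⟨hx.1, by linarith [hx.2]⟩) (hpI y ⟨hy.1, by linarith [hy.2]⟩)
      (vm ⟨by linarith [hx.1], hx.2⟩ ⟨by linarith [hy.1], hy.2⟩ hxy)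
  · intro x hx y hy hxy
    exact Hm (hpI y ⟨by linarith [hy.1], hy.2⟩) (hpI x ⟨by linarith [hx.1], hx.2⟩)
      (van ⟨hx.1, by linarith [hx.2]⟩ ⟨hy.1, by linarith [hy.2]⟩ hxy)

lemma half' (J : Finset ℕ) (s : ℕ → ℝ) (K : ℕ) (t₀ α β α' β' : ℝ)
    (h0 : -π < α') (h1 : α' < α) (h2 : α < t₀) (h3 : t₀ < β) (h4 : β < β') (h5 : β' < π)
    (hs : ∀ j ∈ J, β' < s j ∧ s j < π) :
    ∃ (D : ℕ) (M r : ℝ), 0 < M ∧ 0 < r ∧ r < 1 ∧ ∀ N : ℕ, ∃ q : ℝ → ℝ, IsTrigPoly (D * (N + 1)) q ∧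
      q t₀ = 1 ∧ (∀ t ∈ Set.Icc (-π) π, 0 ≤ q t ∧ (t ≠ t₀ → q t < 1)) ∧
      (∀ j ∈ J, ∃ f g : ℝ → ℝ, ContDiff ℝ (⊤ : ℕ∞) f ∧ ContDiff ℝ (⊤ : ℕ∞) g ∧ f (s j) = 0 ∧
        ∀ t, q t = f t ^ (2 * K) * g t) ∧
      (∀ t ∈ Set.Icc β' π, q t ≤ M * r ^ N ∧
        q t ≤ M * r ^ N * ∏ j ∈ J, |Real.sin ((t - s j) / 2)| ^ (2 * K)) ∧
      (∀ t ∈ Set.Icc α β, 1 - q t ≤ M * r ^ N) ∧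
      StrictMonoOn q (Set.Icc α' t₀) ∧ StrictAntiOn q (Set.Icc t₀ β') := by
  obtain ⟨D, M, r, hM, hr, hr1, h⟩ := half J (fun j => - s j) K (-t₀) (-β) (-α) (-β') (-α')
    (by linarith) (by linarith) (by linarith) (by linarith) (by linarith) (by linarith)
    (fun j hj => ⟨by linarith [(hs j hj).2], by linarith [(hs j hj).1]⟩)
  refine ⟨D, M, r, hM, hr, hr1, fun N => ?_⟩
  obtain ⟨q, q1, q2, q3, q4, q5, q6, q7, q8⟩ := h N
  refine ⟨fun t => q (-t), itp_neg q1, q2, ?_, ?_, ?_, ?_, ?_, ?_⟩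
  · intro t ht
    have := q3 (-t) ⟨by linarith [ht.2], by linarith [ht.1]⟩
    exact ⟨this.1, fun hne => this.2 (fun h => hne (neg_injective h))⟩
  · intro j hj
    obtain ⟨f, g, hf, hg, hf0, e⟩ := q4 j hj
    exact ⟨fun t => f (-t), fun t => g (-t), hf.comp contDiff_neg, hg.comp contDiff_neg, hf0, fun t => e (-t)⟩
  · intro t ht
    have := q5 (-t) ⟨by linarith [ht.2], by linarith [ht.1]⟩
    refine ⟨this.1, this.2.trans (le_of_eq ?_)⟩
    congr 1
    refine Finset.prod_congr rfl (fun j _ => ?_)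
    rw [show (-t - -s j) / 2 = -((t - s j) / 2) by ring, Real.sin_neg, abs_neg]
  · intro t ht
    exact q6 (-t) ⟨by linarith [ht.2], by linarith [ht.1]⟩
  · intro x hx y hy hxy
    exact q8 ⟨by linarith [hy.2], by linarith [hy.1]⟩ ⟨by linarith [hx.2], by linarith [hx.1]⟩ (by linarith)
  · intro x hx y hy hxy
    exact q7 ⟨by linarith [hy.2], by linarith [hy.1]⟩ ⟨by linarith [hx.2], by linarith [hx.1]⟩ (by linarith)

lemma rate (M r : ℝ) (E : ℕ) (hM : 0 < M) (hr : 0 < r) (hr1 : r < 1) (hE : 0 < E) :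
    ∃ δ > (0 : ℝ), ∃ M0 : ℕ, ∀ m : ℕ, M0 ≤ m → ∃ N : ℕ, E * (N + 1) ≤ m ∧ M * r ^ N ≤ Real.exp (-(δ * m)) := by
  obtain ⟨ρ, hρ, hρr⟩ : ∃ ρ > 0, r = Real.exp (-ρ) :=
    ⟨-Real.log r, neg_pos.2 (Real.log_neg hr hr1), by rw [neg_neg, Real.exp_log hr]⟩
  have hE' : (0 : ℝ) < E := by exact_mod_cast hE
  obtain ⟨m0, hm0⟩ := exists_nat_ge ((Real.log M + 2 * ρ) * (2 * E) / ρ)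
  refine ⟨ρ / (2 * E), by positivity, max m0 E, fun m hm => ⟨m / E - 1, ?_, ?_⟩⟩
  · have h1 : 1 ≤ m / E := (Nat.one_le_div_iff hE).2 ((le_max_right _ _).trans hm)
    rw [Nat.sub_add_cancel h1]
    exact Nat.mul_div_le m E
  · have h1 : 1 ≤ m / E := (Nat.one_le_div_iff hE).2 ((le_max_right _ _).trans hm)
    have h2 : (m : ℝ) / E - 2 ≤ ((m / E - 1 : ℕ) : ℝ) := by
      rw [Nat.cast_sub h1, Nat.cast_one]
      have h3 : m < E * (m / E + 1) := Nat.lt_mul_div_succ m hE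
      have h4 : (m : ℝ) < E * (((m / E : ℕ) : ℝ) + 1) := by exact_mod_cast h3
      have h5 : (m : ℝ) / E < ((m / E : ℕ) : ℝ) + 1 := by
        rw [div_lt_iff₀ hE']; linarith
      linarith
    generalize (m / E - 1 : ℕ) = N at h2
    have hmm : (m0 : ℝ) ≤ m := by exact_mod_cast (le_max_left _ _).trans hm
    have h6 : (Real.log M + 2 * ρ) * (2 * E) / ρ ≤ m := hm0.trans hmm
    rw [div_le_iff₀ hρ] at h6
    have h7 : Real.log M + 2 * ρ ≤ m * ρ / (2 * E) := by
      rw [le_div_iff₀ (by positivity)]; exact h6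
    have h8 := mul_le_mul_of_nonneg_left h2 hρ.le
    conv_lhs => rw [← Real.exp_log hM]
    rw [hρr, ← Real.exp_nat_mul, ← Real.exp_add]
    apply Real.exp_le_exp.2
    have e1 : ρ * ((m : ℝ) / E - 2) = 2 * (m * ρ / (2 * E)) - 2 * ρ := by field_simp
    have e2 : ρ / (2 * E) * m = m * ρ / (2 * E) := by ring
    rw [e1] at h8
    rw [e2]
    linarith

lemma lowb (J : Finset ℕ) (s : ℕ → ℝ) (k : ℕ → ℕ) (a b : ℝ) (hab : a ≤ b)
    (h : ∀ j ∈ J, ∀ t ∈ Set.Icc a b, Real.sin ((t - s j) / 2) ≠ 0) :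
    ∃ c : ℝ, 0 < c ∧ c ≤ 1 ∧ ∀ t ∈ Set.Icc a b, c ≤ ∏ j ∈ J, |Real.sin ((t - s j) / 2)| ^ k j := by
  have hc : Continuous (fun t : ℝ => ∏ j ∈ J, |Real.sin ((t - s j) / 2)| ^ k j) := by fun_prop
  obtain ⟨x, hx, hmin⟩ := isCompact_Icc.exists_isMinOn (Set.nonempty_Icc.2 hab) hc.continuousOn
  refine ⟨min 1 (∏ j ∈ J, |Real.sin ((x - s j) / 2)| ^ k j), lt_min one_pos ?_, min_le_left _ _,
    fun t ht => (min_le_right _ _).trans (hmin ht)⟩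
  exact Finset.prod_pos fun j hj => pow_pos (abs_pos.2 (h j hj x hx)) _

lemma zbound (J J' : Finset ℕ) (s : ℕ → ℝ) (k : ℕ → ℕ) (K : ℕ) (c M t y : ℝ) (hc : 0 < c) (hc1 : c ≤ 1)
    (hM : 0 ≤ M)
    (hk : ∀ j ∈ J, k j ≤ 2 * K) (hl : c ≤ ∏ j ∈ J', |Real.sin ((t - s j) / 2)| ^ k j)
    (h1 : y ≤ M) (h2 : y ≤ M * ∏ j ∈ J, |Real.sin ((t - s j) / 2)| ^ (2 * K)) :
    y ≤ min 1 ((∏ j ∈ J, |Real.sin ((t - s j) / 2)| ^ k j) * ∏ j ∈ J', |Real.sin ((t - s j) / 2)| ^ k j)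
      * (M / c) := by
  have hMc : M ≤ M / c := by rw [le_div_iff₀ hc]; nlinarith
  rw [min_mul_of_nonneg _ _ (by positivity : 0 ≤ M / c), one_mul]
  refine le_min (h1.trans hMc) (h2.trans ?_)
  have h3 : ∏ j ∈ J, |Real.sin ((t - s j) / 2)| ^ (2 * K) ≤ ∏ j ∈ J, |Real.sin ((t - s j) / 2)| ^ k j :=
    Finset.prod_le_prod (fun j _ => by positivity) fun j hj =>
      pow_le_pow_of_le_one (abs_nonneg _) (Real.abs_sin_le_one _) (hk j hj)
  have h4 : 0 ≤ ∏ j ∈ J, |Real.sin ((t - s j) / 2)| ^ k j := Finset.prod_nonneg fun j _ => by positivity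
  generalize (∏ j ∈ J, |Real.sin ((t - s j) / 2)| ^ k j) = A at *
  generalize (∏ j ∈ J', |Real.sin ((t - s j) / 2)| ^ k j) = B at *
  generalize (∏ j ∈ J, |Real.sin ((t - s j) / 2)| ^ (2 * K)) = A' at *
  calc M * A' ≤ M * A := mul_le_mul_of_nonneg_left h3 hM
    _ = A * c * (M / c) := by field_simp
    _ ≤ _ := by gcongr

/-- fast decreasing trigonometric polynomials with prescribed zeros. -/
theorem stmt_1 (l : ℕ) (t₀ α β α' β' : ℝ)
    (h0 : -π < α') (h1 : α' < α) (h2 : α < t₀) (h3 : t₀ < β) (h4 : β < β') (h5 : β' < π)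
    (αs : ℕ → ℝ) (hαs : ∀ j : ℕ, 1 ≤ j → j ≤ l → αs j ∈ Set.Ioo (-π) π \ Set.Icc α' β')
    (k : ℕ → ℕ) (hk : ∀ j : ℕ, 1 ≤ j → j ≤ l → 0 < k j) :
    ∃ δ₁ > (0 : ℝ), ∃ M : ℕ, ∀ m : ℕ, M ≤ m →
      ∃ Q : ℝ → ℝ, IsTrigPoly m Q ∧
        Q t₀ = 1 ∧
        (∀ t ∈ Set.Ico (-π) π, t ≠ t₀ → 0 ≤ Q t ∧ Q t < 1) ∧
        (∀ j : ℕ, 1 ≤ j → j ≤ l → ∀ κ ≤ k j, iteratedDeriv κ Q (αs j) = 0) ∧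
        (∀ t ∈ Set.Icc (-π) π \ Set.Ioo α' β',
          Q t ≤ min 1 (∏ j ∈ Finset.Icc 1 l, |Real.sin ((t - αs j) / 2)| ^ k j) *
            Real.exp (-(δ₁ * m))) ∧
        (∀ t ∈ Set.Icc α β, |Q t - 1| ≤ Real.exp (-(δ₁ * m))) ∧
        (StrictMonoOn Q (Set.Icc α' α) ∨ StrictAntiOn Q (Set.Icc α' α)) ∧
        (StrictMonoOn Q (Set.Icc β β') ∨ StrictAntiOn Q (Set.Icc β β')) := by
  have hpi := Real.pi_pos
  obtain ⟨K, hK⟩ : ∃ K : ℕ, ∀ j ∈ Finset.Icc 1 l, k j < 2 * K := by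
    refine ⟨∑ j ∈ Finset.Icc 1 l, k j + 1, fun j hj => ?_⟩
    have := Finset.single_le_sum (f := k) (fun i _ => Nat.zero_le _) hj
    omega
  obtain ⟨JL, hJL⟩ : ∃ JL, JL = (Finset.Icc 1 l).filter (fun j => αs j < α') := ⟨_, rfl⟩
  obtain ⟨JR, hJR⟩ : ∃ JR, JR = (Finset.Icc 1 l).filter (fun j => ¬ αs j < α') := ⟨_, rfl⟩
  have memL : ∀ j ∈ JL, j ∈ Finset.Icc 1 l ∧ -π < αs j ∧ αs j < α' := by
    intro j hj
    rw [hJL, Finset.mem_filter] at hj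
    have hj1 := Finset.mem_Icc.1 hj.1
    exact ⟨hj.1, (hαs j hj1.1 hj1.2).1.1, hj.2⟩
  have memR : ∀ j ∈ JR, j ∈ Finset.Icc 1 l ∧ β' < αs j ∧ αs j < π := by
    intro j hj
    rw [hJR, Finset.mem_filter] at hj
    have hj1 := Finset.mem_Icc.1 hj.1
    have h := hαs j hj1.1 hj1.2
    refine ⟨hj.1, ?_, h.1.2⟩
    by_contra hc
    exact h.2 ⟨not_lt.1 hj.2, not_lt.1 hc⟩
  have hprod : ∀ t, ∏ j ∈ Finset.Icc 1 l, |Real.sin ((t - αs j) / 2)| ^ k j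
      = (∏ j ∈ JL, |Real.sin ((t - αs j) / 2)| ^ k j) * ∏ j ∈ JR, |Real.sin ((t - αs j) / 2)| ^ k j := by
    intro t
    rw [hJL, hJR, Finset.prod_filter_mul_prod_filter_not]
  obtain ⟨c₁, hc₁, hc₁', lb₁⟩ := lowb JR αs k (-π) α' h0.le (fun j hj t ht => by
    obtain ⟨_, a, b⟩ := memR j hj
    exact (Real.sin_neg_of_neg_of_neg_pi_lt (by linarith [ht.2]) (by linarith [ht.1])).ne)
  obtain ⟨c₂, hc₂, hc₂', lb₂⟩ := lowb JL αs k β' π h5.le (fun j hj t ht => by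
    obtain ⟨_, a, b⟩ := memL j hj
    exact (Real.sin_pos_of_pos_of_lt_pi (by linarith [ht.1]) (by linarith [ht.2])).ne')
  obtain ⟨D₁, M₁, r₁, hM₁, hr₁, hr₁', H₁⟩ := half JL αs K t₀ α β α' β' h0 h1 h2 h3 h4 h5
    (fun j hj => (memL j hj).2)
  obtain ⟨D₂, M₂, r₂, hM₂, hr₂, hr₂', H₂⟩ := half' JR αs K t₀ α β α' β' h0 h1 h2 h3 h4 h5
    (fun j hj => (memR j hj).2)
  obtain ⟨δ, hδ, M0, hrate⟩ := rate (M₁ / c₁ + M₂ / c₂) (max r₁ r₂) (D₁ + D₂ + 1) (by positivity)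
    (lt_max_of_lt_left hr₁) (max_lt hr₁' hr₂') (Nat.succ_pos _)
  refine ⟨δ, hδ, M0, fun m hm => ?_⟩
  obtain ⟨N, hN, hexp⟩ := hrate m hm
  obtain ⟨f, f1, f2, f3, f4, f5, f6, f7, f8⟩ := H₁ N
  obtain ⟨g, g1, g2, g3, g4, g5, g6, g7, g8⟩ := H₂ N
  have hr0 : 0 ≤ max r₁ r₂ := (lt_max_of_lt_left hr₁).le
  have e₁ : M₁ * r₁ ^ N / c₁ ≤ M₁ / c₁ * max r₁ r₂ ^ N := by
    rw [div_mul_eq_mul_div]; gcongr; exact le_max_left _ _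
  have e₂ : M₂ * r₂ ^ N / c₂ ≤ M₂ / c₂ * max r₁ r₂ ^ N := by
    rw [div_mul_eq_mul_div]; gcongr; exact le_max_right _ _
  have p₁ : 0 ≤ M₁ * r₁ ^ N := by positivity
  have p₂ : 0 ≤ M₂ * r₂ ^ N := by positivity
  have i₁ : M₁ * r₁ ^ N ≤ M₁ * r₁ ^ N / c₁ := by rw [le_div_iff₀ hc₁]; nlinarith
  have i₂ : M₂ * r₂ ^ N ≤ M₂ * r₂ ^ N / c₂ := by rw [le_div_iff₀ hc₂]; nlinarith
  rw [add_mul] at hexp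
  have fle : ∀ t ∈ Set.Icc (-π) π, f t ≤ 1 := fun t ht => by
    by_cases h : t = t₀
    · rw [h, f2]
    · exact ((f3 t ht).2 h).le
  have gle : ∀ t ∈ Set.Icc (-π) π, g t ≤ 1 := fun t ht => by
    by_cases h : t = t₀
    · rw [h, g2]
    · exact ((g3 t ht).2 h).le
  have hfc := itp_contDiff f1
  have hgc := itp_contDiff g1
  refine ⟨fun t => f t * g t, itp_mono ?_ (itp_mul f1 g1), by simp [f2, g2], ?_, ?_, ?_, ?_, ?_, ?_⟩
  · refine le_trans ?_ hN
    rw [← add_mul]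
    exact Nat.mul_le_mul_right _ (Nat.le_succ _)
  · intro t ht hne
    have ht' : t ∈ Set.Icc (-π) π := ⟨ht.1, ht.2.le⟩
    have a := f3 t ht'
    have b := g3 t ht'
    refine ⟨mul_nonneg a.1 b.1, ?_⟩
    exact lt_of_le_of_lt (mul_le_of_le_one_right a.1 (gle t ht')) (a.2 hne)
  · intro j hj1 hj2 κ hκ
    have hj : j ∈ Finset.Icc 1 l := Finset.mem_Icc.2 ⟨hj1, hj2⟩
    have hκ' : κ < 2 * K := lt_of_le_of_lt hκ (hK j hj)
    by_cases hlt : αs j < α'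
    · obtain ⟨u, w, hu, hw, hu0, e⟩ := f4 j (by rw [hJL]; exact Finset.mem_filter.2 ⟨hj, hlt⟩)
      have : (fun t => f t * g t) = fun t => u t ^ (2 * K) * (w t * g t) := by
        funext t; rw [e t]; ring
      rw [this]
      exact iter_zero u hu _ hu0 κ _ _ (hw.mul hgc) hκ'
    · obtain ⟨u, w, hu, hw, hu0, e⟩ := g4 j (by rw [hJR]; exact Finset.mem_filter.2 ⟨hj, hlt⟩)
      have : (fun t => f t * g t) = fun t => u t ^ (2 * K) * (w t * f t) := by
        funext t; rw [e t]; ring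
      rw [this]
      exact iter_zero u hu _ hu0 κ _ _ (hw.mul hfc) hκ'
  · intro t ht
    have hZ : 0 ≤ min 1 (∏ j ∈ Finset.Icc 1 l, |Real.sin ((t - αs j) / 2)| ^ k j) :=
      le_min zero_le_one (Finset.prod_nonneg fun j _ => by positivity)
    have a := f3 t ht.1
    have b := g3 t ht.1
    rcases le_or_gt t α' with h | h
    · have hL : t ∈ Set.Icc (-π) α' := ⟨ht.1.1, h⟩
      have z := zbound JL JR αs k K c₁ (M₁ * r₁ ^ N) t (f t) hc₁ hc₁' p₁ (fun j hj => (hK j (memL j hj).1).le)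
        (lb₁ t hL) (f5 t hL).1 (f5 t hL).2
      rw [← hprod] at z
      refine (mul_le_of_le_one_right a.1 (gle t ht.1)).trans (z.trans (mul_le_mul_of_nonneg_left ?_ hZ))
      linarith
    · have hL : t ∈ Set.Icc β' π := ⟨by
        by_contra hc
        exact ht.2 ⟨h, not_le.1 hc⟩, ht.1.2⟩
      have z := zbound JR JL αs k K c₂ (M₂ * r₂ ^ N) t (g t) hc₂ hc₂' p₂ (fun j hj => (hK j (memR j hj).1).le)
        (lb₂ t hL) (g5 t hL).1 (g5 t hL).2
      rw [mul_comm (∏ j ∈ JR, _), ← hprod] at z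
      refine (mul_le_of_le_one_left b.1 (fle t ht.1)).trans (z.trans (mul_le_mul_of_nonneg_left ?_ hZ))
      linarith
  · intro t ht
    have ht' : t ∈ Set.Icc (-π) π := ⟨by linarith [ht.1], by linarith [ht.2]⟩
    have a := f3 t ht'
    have b := g3 t ht'
    have a' := fle t ht'
    have b' := gle t ht'
    have := f6 t ht
    have := g6 t ht
    rw [abs_sub_comm, abs_of_nonneg (by nlinarith [a.1, b.1])]
    nlinarith [a.1, b.1]
  · left
    intro x hx y hy hxy
    have hx' : x ∈ Set.Icc α' t₀ := ⟨hx.1, by linarith [hx.2]⟩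
    have hy' : y ∈ Set.Icc α' t₀ := ⟨hy.1, by linarith [hy.2]⟩
    have hxπ : x ∈ Set.Icc (-π) π := ⟨by linarith [hx.1], by linarith [hx.2]⟩
    exact mul_lt_mul'' (f7 hx' hy' hxy) (g7 hx' hy' hxy) (f3 x hxπ).1 (g3 x hxπ).1
  · right
    intro x hx y hy hxy
    have hx' : x ∈ Set.Icc t₀ β' := ⟨by linarith [hx.1], hx.2⟩
    have hy' : y ∈ Set.Icc t₀ β' := ⟨by linarith [hy.1], hy.2⟩
    have hyπ : y ∈ Set.Icc (-π) π := ⟨by linarith [hy.1], by linarith [hy.2]⟩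
    exact mul_lt_mul'' (f8 hx' hy' hxy) (g8 hx' hy' hxy) (f3 y hyπ).1 (g3 y hyπ).1
end

section
/- Let I ⊂ (−π, π) be a closed set consisting of finitely many disjoint closed intervals, none of which is a singleton, and let k be a positive integer. Then there exists C = C(I, k) > 0 such that for every n and every trigonometric polynomial T_n of degree at most n, ‖T_n^{(k)}‖_I ≤ C n^{2k} ‖T_n‖_I. -/
open scoped Real

/-- Sup-norm of a function over a set. -/
noncomputable def supNormR (f : ℝ → ℝ) (X : Set ℝ) : ℝ := ⨆ x ∈ X, |f x|

open Polynomial in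
lemma markov_one (n : ℕ) (Q : Polynomial ℝ) (hd : Q.natDegree ≤ n) (M : ℝ)
    (hM : 0 < M) (hb : ∀ x ∈ Set.Icc (-1:ℝ) 1, |Q.eval x| ≤ M) :
    (derivative Q).eval 1 ≤ (n:ℝ)^2 * M := by
  have h := Polynomial.Chebyshev.eval_iterate_derivative_le_of_forall_abs_le_one (n := n)
    (P := C M⁻¹ * Q) (k := 1) (x := 1) le_rfl
    (natDegree_le_iff_degree_le.1 ((natDegree_C_mul_le M⁻¹ Q).trans hd))
    (fun x hx => by
      rw [eval_mul, eval_C, abs_mul, abs_of_pos (inv_pos.2 hM)]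
      have := hb x hx
      rw [inv_mul_le_iff₀ hM]; linarith)
  have h2 : (derivative (Polynomial.Chebyshev.T ℝ n)).eval 1 = (n:ℝ)^2 := by
    rw [Polynomial.Chebyshev.T_derivative_eq_U]
    simp [Polynomial.Chebyshev.U_eval_one]
    ring
  simp only [Function.iterate_one, derivative_mul, derivative_C, zero_mul, zero_add, eval_mul,
    eval_C, h2] at h
  rw [inv_mul_le_iff₀ hM] at h
  linarith

lemma le_of_all_gt (y K M : ℝ) (h : ∀ M' > M, y ≤ K * M') : y ≤ K * M := by
  have ht : Filter.Tendsto (fun M' => K * M') (nhdsWithin M (Set.Ioi M)) (nhds (K * M)) :=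
    ((continuous_const.mul continuous_id).tendsto M).mono_left nhdsWithin_le_nhds
  exact ge_of_tendsto ht (Filter.eventually_of_mem self_mem_nhdsWithin h)

open Polynomial in
lemma markov_aff (n : ℕ) (P : Polynomial ℝ) (hd : P.natDegree ≤ n) (M m h : ℝ)
    (hM : 0 ≤ M) (hb : ∀ x ∈ Set.Icc (-1:ℝ) 1, |P.eval (m + h * x)| ≤ M) :
    |h| * |(derivative P).eval (m + h)| ≤ (n:ℝ)^2 * M := by
  apply le_of_all_gt
  intro M' hM'
  set Q := P.comp (C m + C h * X) with hQ
  have hdQ : Q.natDegree ≤ n := by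
    have h1 : (C m + C h * X).natDegree ≤ 1 := by
      compute_degree
    calc Q.natDegree ≤ P.natDegree * (C m + C h * X).natDegree := natDegree_comp_le
      _ ≤ n * 1 := Nat.mul_le_mul hd h1
      _ = n := mul_one n
  have hbQ : ∀ x ∈ Set.Icc (-1:ℝ) 1, |Q.eval x| ≤ M' := by
    intro x hx
    have := hb x hx
    simp only [hQ, eval_comp, eval_add, eval_mul, eval_C, eval_X]
    linarith
  have e1 : (derivative Q).eval 1 = h * (derivative P).eval (m + h) := by
    simp [hQ, derivative_comp]
  have h1 := markov_one n Q hdQ M' (by linarith) hbQ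
  have h2 := markov_one n (-Q) (by simpa using hdQ) M' (by linarith) (by simpa using hbQ)
  rw [derivative_neg, eval_neg] at h2
  rw [← abs_mul, ← e1]
  exact abs_le.2 ⟨by linarith, h1⟩

open Polynomial in
lemma markov_sym (n : ℕ) (P : Polynomial ℝ) (hd : P.natDegree ≤ n) (M b : ℝ) (hb0 : 0 < b)
    (hb : ∀ x ∈ Set.Icc (-b) b, |P.eval x| ≤ M) (y : ℝ) (hy : y ∈ Set.Icc (-b) b) :
    |(derivative P).eval y| ≤ 2 / b * ((n:ℝ)^2 * M) := by
  have hM : 0 ≤ M := (abs_nonneg _).trans (hb y hy)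
  obtain ⟨hy1, hy2⟩ := hy
  have key : ∀ h m : ℝ, b / 2 ≤ |h| → m + h = y → 
      (∀ x ∈ Set.Icc (-1:ℝ) 1, m + h * x ∈ Set.Icc (-b) b) → 
      |(derivative P).eval y| ≤ 2 / b * ((n:ℝ)^2 * M) := by
    intro h m hh e hx
    have := markov_aff n P hd M m h hM (fun x hx' => hb _ (hx x hx'))
    rw [e] at this
    have h3 : b / 2 * |(derivative P).eval y| ≤ (n:ℝ)^2 * M :=
      (mul_le_mul_of_nonneg_right hh (abs_nonneg _)).trans this
    calc |(derivative P).eval y| = 2 / b * (b / 2 * |(derivative P).eval y|) := by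
          field_simp
      _ ≤ _ := mul_le_mul_of_nonneg_left h3 (by positivity)
  rcases le_total 0 y with h0 | h0
  · refine key ((y + b)/2) ((y - b)/2) ?_ (by ring) ?_
    · rw [abs_of_nonneg (by linarith)]; linarith
    · rintro x ⟨hx1, hx2⟩
      constructor <;> nlinarith
  · refine key ((y - b)/2) ((y + b)/2) ?_ (by ring) ?_
    · rw [abs_of_nonpos (by linarith)]; linarith
    · rintro x ⟨hx1, hx2⟩
      constructor <;> nlinarith

open Polynomial in
lemma trig_repr (n : ℕ) (T : ℝ → ℝ) (hT : IsTrigPoly n T) :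
    ∃ p q : Polynomial ℝ, p.natDegree ≤ 2 * n ∧ q.natDegree ≤ 2 * n ∧
      (∀ x, p.eval (-x) = p.eval x) ∧ (∀ x, q.eval (-x) = - q.eval x) ∧
      ∀ t, T t = p.eval (Real.sin (t/2)) + Real.cos (t/2) * q.eval (Real.sin (t/2)) := by
  obtain ⟨A, B, rfl⟩ := hT
  have hdeg : (1 - 2 * X ^ 2 : Polynomial ℝ).natDegree ≤ 2 := by compute_degree
  refine ⟨∑ j ∈ Finset.range (n+1), C (A j) * (Chebyshev.T ℝ j).comp (1 - 2 * X ^ 2),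
    ∑ j ∈ Finset.range (n+1),
      C (B j) * (2 * X * (Chebyshev.U ℝ ((j:ℤ) - 1)).comp (1 - 2 * X ^ 2)), ?_, ?_, ?_, ?_, ?_⟩
  · refine natDegree_sum_le_of_forall_le _ _ (fun j hj => ?_)
    have hj' : j ≤ n := by simpa [Nat.lt_succ_iff] using hj
    refine (natDegree_C_mul_le _ _).trans (natDegree_comp_le.trans ?_)
    have h1 : (Chebyshev.T ℝ (j:ℤ)).natDegree ≤ j := by
      simp
    calc _ ≤ j * 2 := Nat.mul_le_mul h1 hdeg
      _ ≤ _ := by omega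
  · refine natDegree_sum_le_of_forall_le _ _ (fun j hj => ?_)
    have hj' : j ≤ n := by simpa [Nat.lt_succ_iff] using hj
    refine (natDegree_C_mul_le _ _).trans ?_
    rcases j with _ | j
    · simp
    · have h1 : (Chebyshev.U ℝ (((j+1:ℕ):ℤ) - 1)).natDegree ≤ j := by
        have : (((j+1:ℕ):ℤ) - 1) = (j:ℤ) := by push_cast; ring
        rw [this]
        simp
      have h2 : (2 * X : Polynomial ℝ).natDegree ≤ 1 := by compute_degree
      refine natDegree_mul_le.trans ?_
      have h3 := (natDegree_comp_le (p := Chebyshev.U ℝ (((j+1:ℕ):ℤ) - 1)) (q := (1 - 2 * X ^ 2 : Polynomial ℝ))).trans (Nat.mul_le_mul h1 hdeg)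
      omega
  · intro x
    simp [eval_finsetSum]
  · intro x
    simp [eval_finsetSum]
  · intro t
    have hc : 1 - 2 * Real.sin (t/2) ^ 2 = Real.cos t := by
      have := Real.cos_sq' (t/2)
      have h2 := Real.cos_two_mul (t/2)
      rw [show 2 * (t/2) = t by ring] at h2
      linarith
    have hs : Real.sin t = 2 * Real.sin (t/2) * Real.cos (t/2) := by
      have h2 := Real.sin_two_mul (t/2)
      rwa [show 2 * (t/2) = t by ring] at h2
    simp only [eval_finsetSum, Finset.mul_sum, ← Finset.sum_add_distrib]
    refine Finset.sum_congr rfl (fun j _ => ?_)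
    simp only [eval_mul, eval_C, eval_comp, eval_sub, eval_one, eval_pow, eval_X, eval_ofNat, hc]
    have hU := Chebyshev.U_real_cos t ((j:ℤ) - 1)
    rw [Chebyshev.T_real_cos]
    push_cast at hU ⊢
    rw [sub_add_cancel] at hU
    rw [← hU, hs]
    ring

lemma trig_const (T : ℝ → ℝ) (hT : IsTrigPoly 0 T) (t : ℝ) : deriv T t = 0 := by
  obtain ⟨A, B, rfl⟩ := hT
  simp

lemma trig_hasDeriv (n : ℕ) (T : ℝ → ℝ) (hT : IsTrigPoly n T) :
    IsTrigPoly n (deriv T) := by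
  obtain ⟨A, B, rfl⟩ := hT
  refine ⟨fun j => j * B j, fun j => - (j * A j), ?_⟩
  funext t
  refine HasDerivAt.deriv ?_
  refine HasDerivAt.fun_sum (fun j _ => ?_)
  have h0 : HasDerivAt (fun t : ℝ => (j:ℝ) * t) j t := by
    simpa using (hasDerivAt_id t).const_mul (j:ℝ)
  convert! (h0.cos.const_mul (A j)).add (h0.sin.const_mul (B j)) using 1
  ring

lemma trig_shift (n : ℕ) (T : ℝ → ℝ) (hT : IsTrigPoly n T) (s : ℝ) :
    IsTrigPoly n (fun t => T (t + s)) := by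
  obtain ⟨A, B, rfl⟩ := hT
  refine ⟨fun j => A j * Real.cos (j * s) + B j * Real.sin (j * s),
    fun j => B j * Real.cos (j * s) - A j * Real.sin (j * s), ?_⟩
  funext t
  refine Finset.sum_congr rfl (fun j _ => ?_)
  rw [mul_add, Real.cos_add, Real.sin_add]
  ring

lemma trig_cont (n : ℕ) (T : ℝ → ℝ) (hT : IsTrigPoly n T) : Continuous T := by
  obtain ⟨A, B, rfl⟩ := hT
  fun_prop

open Polynomial in
lemma single_sym (a : ℝ) (ha : 0 < a) (ha' : a < π) :
    ∃ K : ℝ, 0 ≤ K ∧ ∀ n T, IsTrigPoly n T → ∀ M, (∀ t ∈ Set.Icc (-a) a, |T t| ≤ M) →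
      ∀ t ∈ Set.Icc (-a) a, |deriv T t| ≤ K * (n:ℝ)^2 * M := by
  set b := Real.sin (a/2) with hbdef
  set κ := Real.cos (a/2) with hκdef
  have hb : 0 < b := Real.sin_pos_of_pos_of_lt_pi (by linarith) (by linarith)
  have hκ : 0 < κ := Real.cos_pos_of_mem_Ioo ⟨by linarith, by linarith⟩
  refine ⟨4 / b + 1 / (2 * κ) + 4 / (b * κ), by positivity, ?_⟩
  intro n T hT M hM t ht
  rcases Nat.eq_zero_or_pos n with rfl | hn
  · rw [trig_const T hT]; simp
  have hM0 : 0 ≤ M := (abs_nonneg _).trans (hM t ht)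
  obtain ⟨p, q, hp, hq, hpe, hqo, hrep⟩ := trig_repr n T hT
  have hpq : ∀ x ∈ Set.Icc (-b) b, |p.eval x| ≤ M ∧ |q.eval x| ≤ M / κ := by
    rintro x ⟨hx1, hx2⟩
    have hb1 : b ≤ 1 := Real.sin_le_one _
    set u := Real.arcsin x with hu
    have hsu : Real.sin u = x := Real.sin_arcsin (by linarith) (by linarith)
    have hu2 : u ≤ a / 2 := by
      rw [hu, Real.arcsin_le_iff_le_sin' ⟨by linarith, by linarith⟩]; exact hx2
    have hu1 : -(a / 2) ≤ u := by
      rw [hu, Real.le_arcsin_iff_sin_le' ⟨by linarith, by linarith⟩, Real.sin_neg]; exact hx1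
    have h1 := hM (2 * u) ⟨by linarith, by linarith⟩
    have h2 := hM (-(2 * u)) ⟨by linarith, by linarith⟩
    rw [hrep, show 2 * u / 2 = u by ring, hsu] at h1
    rw [hrep, show -(2 * u) / 2 = -u by ring, Real.sin_neg, Real.cos_neg, hsu] at h2
    have hev : p.eval (-x) + Real.cos u * q.eval (-x) = p.eval x - Real.cos u * q.eval x := by
      rw [hpe, hqo]; ring
    rw [hev] at h2
    rw [abs_le] at h1 h2
    have hcu : κ ≤ Real.cos u := by
      rw [hκdef, ← Real.cos_abs u]
      exact Real.cos_le_cos_of_nonneg_of_le_pi (abs_nonneg _) (by linarith)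
        (abs_le.2 ⟨hu1, hu2⟩)
    refine ⟨abs_le.2 ⟨by linarith, by linarith⟩, ?_⟩
    rw [le_div_iff₀ hκ]
    have h3 : |Real.cos u * q.eval x| ≤ M := abs_le.2 ⟨by linarith, by linarith⟩
    rw [abs_mul, abs_of_pos (hκ.trans_le hcu)] at h3
    nlinarith [abs_nonneg (q.eval x)]
  have hdT : HasDerivAt T ((derivative p).eval (Real.sin (t/2)) * (Real.cos (t/2) * (1/2)) +
      (-Real.sin (t/2) * (1/2) * q.eval (Real.sin (t/2)) +
        Real.cos (t/2) * ((derivative q).eval (Real.sin (t/2)) * (Real.cos (t/2) * (1/2))))) t := by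
    have h0 : HasDerivAt (fun t : ℝ => t / 2) (1/2) t := (hasDerivAt_id t).div_const 2
    have hTe : T = fun t => p.eval (Real.sin (t/2)) + Real.cos (t/2) * q.eval (Real.sin (t/2)) :=
      funext hrep
    rw [hTe]
    have hp' := (p.hasDerivAt (Real.sin (t/2))).comp t h0.sin
    have hq' := (q.hasDerivAt (Real.sin (t/2))).comp t h0.sin
    exact hp'.add (h0.cos.mul hq')
  rw [hdT.deriv]
  have hsmem : Real.sin (t/2) ∈ Set.Icc (-b) b := by
    obtain ⟨h1, h2⟩ := ht
    constructor
    · rw [hbdef, ← Real.sin_neg]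
      exact Real.sin_le_sin_of_le_of_le_pi_div_two (by linarith) (by linarith) (by linarith)
    · exact Real.sin_le_sin_of_le_of_le_pi_div_two (by linarith) (by linarith) (by linarith)
  have e1 := markov_sym (2*n) p hp M b hb (fun x hx => (hpq x hx).1) _ hsmem
  have e2 := markov_sym (2*n) q hq (M/κ) b hb (fun x hx => (hpq x hx).2) _ hsmem
  have e3 := (hpq _ hsmem).2
  set s := Real.sin (t/2)
  set c := Real.cos (t/2)
  have hs : |s| ≤ 1 := Real.abs_sin_le_one _
  have hc : |c| ≤ 1 := Real.abs_cos_le_one _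
  have hn1 : (1:ℝ) ≤ (n:ℝ)^2 := one_le_pow₀ (by exact_mod_cast hn)
  have f1 : |(derivative p).eval s * (c * (1/2))| ≤ (2 / b * (((2*n:ℕ):ℝ)^2 * M)) * (1 * (1/2)) := by
    rw [abs_mul, abs_mul, abs_of_pos (by norm_num : (0:ℝ) < 1/2)]
    gcongr
  have f2 : |-s * (1/2) * q.eval s| ≤ 1 * (1/2) * (M/κ) := by
    rw [abs_mul, abs_mul, abs_neg, abs_of_pos (by norm_num : (0:ℝ) < 1/2)]
    gcongr
  have f3 : |c * ((derivative q).eval s * (c * (1/2)))| ≤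
      1 * ((2 / b * (((2*n:ℕ):ℝ)^2 * (M/κ))) * (1 * (1/2))) := by
    rw [abs_mul, abs_mul, abs_mul, abs_of_pos (by norm_num : (0:ℝ) < 1/2)]
    gcongr
  have f4 : 1 * (1/2) * (M/κ) ≤ 1 * (1/2) * (M/κ) * (n:ℝ)^2 :=
    le_mul_of_one_le_right (by positivity) hn1
  refine (abs_add_le _ _).trans ((add_le_add f1 ((abs_add_le _ _).trans
    (add_le_add (f2.trans f4) f3))).trans (le_of_eq ?_))
  push_cast
  field_simp
  ring

lemma single (c d : ℝ) (h : c < d) (h' : d - c < 2 * π) :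
    ∃ K : ℝ, 0 ≤ K ∧ ∀ n T, IsTrigPoly n T → ∀ M, (∀ t ∈ Set.Icc c d, |T t| ≤ M) →
      ∀ t ∈ Set.Icc c d, |deriv T t| ≤ K * (n:ℝ)^2 * M := by
  obtain ⟨K, hK, H⟩ := single_sym ((d - c)/2) (by linarith) (by linarith)
  refine ⟨K, hK, ?_⟩
  intro n T hT M hM t ht
  have := H n _ (trig_shift n T hT ((c+d)/2)) M
    (fun u hu => hM _ ⟨by linarith [hu.1], by linarith [hu.2]⟩) (t - (c+d)/2)
    ⟨by linarith [ht.1], by linarith [ht.2]⟩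
  rw [deriv_comp_add_const] at this
  simpa using this

lemma single_iter (c d K : ℝ) (hK : 0 ≤ K)
    (H : ∀ n T, IsTrigPoly n T → ∀ M, (∀ t ∈ Set.Icc c d, |T t| ≤ M) →
      ∀ t ∈ Set.Icc c d, |deriv T t| ≤ K * (n:ℝ)^2 * M) (k n : ℕ) :
    ∀ T, IsTrigPoly n T → ∀ M, (∀ t ∈ Set.Icc c d, |T t| ≤ M) →
      ∀ t ∈ Set.Icc c d, |iteratedDeriv k T t| ≤ (K * (n:ℝ)^2)^k * M := by
  induction k with
  | zero => intro T _ M hM t ht; simpa using hM t ht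
  | succ k ih =>
    intro T hT M hM t ht
    rw [iteratedDeriv_succ', pow_succ, mul_assoc]
    exact ih _ (trig_hasDeriv n T hT) _ (H n T hT M hM) t ht

lemma le_supNorm (T : ℝ → ℝ) (hT : Continuous T) (X : Set ℝ) (hX : IsCompact X) (x : ℝ)
    (hx : x ∈ X) : |T x| ≤ supNormR T X := by
  obtain ⟨B, hB⟩ := hX.exists_bound_of_continuousOn hT.continuousOn
  have hB0 : 0 ≤ B := (norm_nonneg _).trans (hB x hx)
  have hbdd : BddAbove (Set.range (fun y => ⨆ (_ : y ∈ X), |T y|)) := by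
    refine ⟨B, ?_⟩
    rintro _ ⟨y, rfl⟩
    exact Real.iSup_le (fun hy => hB y hy) hB0
  have h1 := le_ciSup hbdd x
  have h2 : (⨆ (_ : x ∈ X), |T x|) = |T x| := ciSup_pos hx
  rw [← h2]
  exact h1

/-- rough Markov-type inequality on a finite union of intervals. -/
theorem stmt_2 (m : ℕ) (c d : Fin m → ℝ)
    (hcd : ∀ j, c j < d j)
    (hsub : ∀ j, Set.Icc (c j) (d j) ⊆ Set.Ioo (-π) π)
    (hdisj : ∀ i j, i ≠ j → Disjoint (Set.Icc (c i) (d i)) (Set.Icc (c j) (d j)))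
    (I : Set ℝ) (hI : I = ⋃ j, Set.Icc (c j) (d j))
    (k : ℕ) (hk : 0 < k) :
    ∃ C > (0 : ℝ), ∀ n : ℕ, ∀ T : ℝ → ℝ, IsTrigPoly n T →
      ∀ t ∈ I, |iteratedDeriv k T t| ≤ C * (n : ℝ) ^ (2 * k) * supNormR T I := by
  have hs : ∀ j, ∃ K : ℝ, 0 ≤ K ∧ ∀ n T, IsTrigPoly n T → ∀ M,
      (∀ t ∈ Set.Icc (c j) (d j), |T t| ≤ M) →
      ∀ t ∈ Set.Icc (c j) (d j), |deriv T t| ≤ K * (n:ℝ)^2 * M := by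
    intro j
    refine single (c j) (d j) (hcd j) ?_
    have h1 := (hsub j (Set.left_mem_Icc.2 (hcd j).le)).1
    have h2 := (hsub j (Set.right_mem_Icc.2 (hcd j).le)).2
    linarith
  choose K hK H using hs
  have hcomp : IsCompact I := by
    rw [hI]
    exact isCompact_iUnion (fun j => isCompact_Icc)
  refine ⟨1 + ∑ j, K j ^ k, ?_, ?_⟩
  · have : 0 ≤ ∑ j, K j ^ k := Finset.sum_nonneg (fun j _ => pow_nonneg (hK j) k)
    linarith
  intro n T hT t ht
  have hle := le_supNorm T (trig_cont n T hT) I hcomp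
  have hS : 0 ≤ supNormR T I := (abs_nonneg _).trans (hle t ht)
  rw [hI] at ht
  obtain ⟨j, hj⟩ := Set.mem_iUnion.1 ht
  have h1 := single_iter (c j) (d j) (K j) (hK j) (H j) k n T hT (supNormR T I)
    (fun u hu => hle u (by rw [hI]; exact Set.mem_iUnion.2 ⟨j, hu⟩)) t hj
  refine h1.trans ?_
  rw [mul_pow, ← pow_mul]
  have h2 : K j ^ k ≤ 1 + ∑ j, K j ^ k := by
    have := Finset.single_le_sum (f := fun j => K j ^ k)
      (fun j _ => pow_nonneg (hK j) k) (Finset.mem_univ j)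
    linarith
  gcongr
end
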